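/- arXiv:1810.02846 — 3 statements merged into one kernel-verified Lean document; each statement's English description precedes it below -/
import Mathlib

section
/- The 𝕜-submodule T^A_𝔞(n,d) is closed under the multiplication of S^A(n,d); that is, T^A_𝔞(n,d) is a 𝕜-subalgebra of S^A(n,d). Moreover, if (A,𝔞) is a unital good pair, then T^A_𝔞(n,d) is a unital subalgebra, i.e. it contains the identity element 1_A ⊗ ⋯ ⊗ 1_A of S^A(n,d). -/
open Finset

open scoped Classical TensorProduct

noncomputable section

namespace GS

/-- A *good pair* `(A, 𝔞)`: a `𝕜`-superalgebra `A = ev ⊕ od` which is free as a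
`𝕜`-supermodule, together with a subalgebra `𝔞 = aa ⊆ A₀` such that `𝔞` and `A/𝔞` are free,
a complement `𝔠 = cc` of `𝔞` in `A₀`, and an `(A,𝔞)`-basis `B = B_𝔞 ⊔ B_𝔠 ⊔ B_1`
(encoded by `bas : Basis β 𝕜 A` with the partition `part : β → Fin 3`,
where `0` = `B_𝔞`, `1` = `B_𝔠`, `2` = `B_1`). -/
structure GoodPair (𝕜 A β : Type) [CommRing 𝕜] [NonUnitalRing A] [Module 𝕜 A] : Type where
  ev : Submodule 𝕜 A
  od : Submodule 𝕜 A
  compl : IsCompl ev od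
  mul_ee : ∀ a ∈ ev, ∀ b ∈ ev, a * b ∈ ev
  mul_eo : ∀ a ∈ ev, ∀ b ∈ od, a * b ∈ od
  mul_oe : ∀ a ∈ od, ∀ b ∈ ev, a * b ∈ od
  mul_oo : ∀ a ∈ od, ∀ b ∈ od, a * b ∈ ev
  free_ev : Module.Free 𝕜 ev
  free_od : Module.Free 𝕜 od
  aa : Submodule 𝕜 A
  aa_le_ev : aa ≤ ev
  aa_mul : ∀ a ∈ aa, ∀ b ∈ aa, a * b ∈ aa
  free_aa : Module.Free 𝕜 aa
  free_quot : Module.Free 𝕜 (A ⧸ aa)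
  cc : Submodule 𝕜 A
  aa_inf_cc : aa ⊓ cc = ⊥
  aa_sup_cc : aa ⊔ cc = ev
  bas : Module.Basis β 𝕜 A
  part : β → Fin 3
  bas_mem_aa : ∀ i, part i = 0 → bas i ∈ aa
  bas_mem_cc : ∀ i, part i = 1 → bas i ∈ cc
  bas_mem_od : ∀ i, part i = 2 → bas i ∈ od

variable {𝕜 A β : Type} [CommRing 𝕜] [NonUnitalRing A] [Module 𝕜 A]

/-- An element is homogeneous if it lies in the even or the odd part. -/
def Homog (P : GoodPair 𝕜 A β) (a : A) : Prop := a ∈ P.ev ∨ a ∈ P.od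

/-- `H`, the set of nonzero homogeneous elements of `A`. -/
def Hset (P : GoodPair 𝕜 A β) : Set A := {a | Homog P a ∧ a ≠ 0}

/-- `⟨𝐚,𝐜⟩ = #{(k,l) : k > l, a_k odd, c_l odd}` (the Koszul sign count). -/
def koz (od : Submodule 𝕜 A) {d : ℕ} (a c : Fin d → A) : ℕ :=
  (univ.filter fun kl : Fin d × Fin d => kl.2 < kl.1 ∧ a kl.1 ∈ od ∧ c kl.2 ∈ od).card

/-- `⟨σ;𝐚⟩ = #{(k,l) : k < l, σ⁻¹k > σ⁻¹l, a_k and a_l odd}`. -/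
def sgnc (od : Submodule 𝕜 A) {d : ℕ} (σ : Equiv.Perm (Fin d)) (a : Fin d → A) : ℕ :=
  (univ.filter fun kl : Fin d × Fin d =>
    kl.1 < kl.2 ∧ σ⁻¹ kl.2 < σ⁻¹ kl.1 ∧ a kl.1 ∈ od ∧ a kl.2 ∈ od).card

/-- `⟨𝐚,𝐫,𝐬⟩ = #{(k,l) : k < l, a_k, a_l odd, (a_k,r_k,s_k) > (a_l,r_l,s_l)}` with respect to
the fixed total order `ord` on `A × [1,n] × [1,n]`. -/
def ang {n : ℕ} (od : Submodule 𝕜 A) (ord : LinearOrder (A × Fin n × Fin n))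
    {d : ℕ} (a : Fin d → A) (r s : Fin d → Fin n) : ℕ :=
  (univ.filter fun kl : Fin d × Fin d =>
    kl.1 < kl.2 ∧ a kl.1 ∈ od ∧ a kl.2 ∈ od ∧
      ord.lt (a kl.2, r kl.2, s kl.2) (a kl.1, r kl.1, s kl.1)).card

/-- `(𝐚,𝐫,𝐬) ∈ Tri^H(n,d)`: all entries are nonzero homogeneous, and a repeated entry
triple forces evenness. -/
def IsTriH (P : GoodPair 𝕜 A β) {n d : ℕ} (a : Fin d → A) (r s : Fin d → Fin n) : Prop :=
  (∀ k, a k ∈ Hset P) ∧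
    ∀ k l : Fin d, k ≠ l → (a k, r k, s k) = (a l, r l, s l) → a k ∈ P.ev

/-- `(𝐛,𝐫,𝐬) ∈ Tri^B(n,d)` for words of basis elements. -/
def IsTriB (P : GoodPair 𝕜 A β) {n d : ℕ} (b : Fin d → β) (r s : Fin d → Fin n) : Prop :=
  ∀ k l : Fin d, k ≠ l → ((b k, r k, s k) : β × Fin n × Fin n) = (b l, r l, s l) →
    P.part (b k) ≠ 2

/-- Minimal length representatives of the cosets `(S_e × S_f)\S_{e+f}`. -/
def IsShuffle (e f : ℕ) (σ : Equiv.Perm (Fin (e + f))) : Prop :=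
  (∀ k l : Fin (e + f), k < l → (l : ℕ) < e → σ⁻¹ k < σ⁻¹ l) ∧
  (∀ k l : Fin (e + f), k < l → e ≤ (k : ℕ) → σ⁻¹ k < σ⁻¹ l)

/-- The tower of superalgebras `M_n(A)^{⊗d}`, `d ≥ 0`, axiomatised.  `X a r s` is the pure
tensor `ξ^{a_1}_{r_1,s_1} ⊗ ⋯ ⊗ ξ^{a_d}_{r_d,s_d}` of matrix units; it is multilinear in the
`A`-entries, the pure tensors of basis elements form a basis, multiplication is the sign-twisted
(Koszul) componentwise one, `act` is the right action of the symmetric groups by superalgebra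
automorphisms, `evT/odT` is the induced supermodule structure, `star` is the `*`-(shuffle)
product and `nab` gives the components of the deconcatenation coproduct `∇`. -/
structure Tower (𝕜 A β : Type) [CommRing 𝕜] [NonUnitalRing A] [Module 𝕜 A]
    (n : ℕ) (T : ℕ → Type) [∀ e, NonUnitalRing (T e)] [∀ e, Module 𝕜 (T e)]
    (P : GoodPair 𝕜 A β) : Type where
  X : ∀ {e : ℕ}, (Fin e → A) → (Fin e → Fin n) → (Fin e → Fin n) → T e
  X_update_add : ∀ {e : ℕ} (a : Fin e → A) (r s : Fin e → Fin n) (k : Fin e) (x y : A),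
    X (Function.update a k (x + y)) r s
      = X (Function.update a k x) r s + X (Function.update a k y) r s
  X_update_smul : ∀ {e : ℕ} (a : Fin e → A) (r s : Fin e → Fin n) (k : Fin e) (c : 𝕜) (x : A),
    X (Function.update a k (c • x)) r s = c • X (Function.update a k x) r s
  bas : ∀ e : ℕ, Module.Basis ((Fin e → β) × (Fin e → Fin n) × (Fin e → Fin n)) 𝕜 (T e)
  bas_eq : ∀ (e : ℕ) (b : Fin e → β) (r s : Fin e → Fin n),
    bas e (b, r, s) = X (fun k => P.bas (b k)) r s
  X_mul : ∀ {e : ℕ} (a c : Fin e → A) (r s t u : Fin e → Fin n),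
    (∀ k, Homog P (a k)) → (∀ k, Homog P (c k)) →
    X a r s * X c t u
      = if s = t then ((-1 : ℤ) ^ koz P.od a c) • X (fun k => a k * c k) r u else 0
  act : ∀ {e : ℕ}, Equiv.Perm (Fin e) → T e →ₗ[𝕜] T e
  act_act : ∀ {e : ℕ} (σ τ : Equiv.Perm (Fin e)) (x : T e), act τ (act σ x) = act (σ * τ) x
  act_mul : ∀ {e : ℕ} (σ : Equiv.Perm (Fin e)) (x y : T e), act σ (x * y) = act σ x * act σ y
  act_X : ∀ {e : ℕ} (σ : Equiv.Perm (Fin e)) (a : Fin e → A) (r s : Fin e → Fin n),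
    (∀ k, Homog P (a k)) →
    act σ (X a r s) = ((-1 : ℤ) ^ sgnc P.od σ a) • X (a ∘ σ) (r ∘ σ) (s ∘ σ)
  evT : ∀ e : ℕ, Submodule 𝕜 (T e)
  odT : ∀ e : ℕ, Submodule 𝕜 (T e)
  complT : ∀ e : ℕ, IsCompl (evT e) (odT e)
  X_mem_evT : ∀ {e : ℕ} (a : Fin e → A) (r s : Fin e → Fin n), (∀ k, Homog P (a k)) →
    Even (univ.filter fun k => a k ∈ P.od).card → X a r s ∈ evT e
  X_mem_odT : ∀ {e : ℕ} (a : Fin e → A) (r s : Fin e → Fin n), (∀ k, Homog P (a k)) →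
    ¬ Even (univ.filter fun k => a k ∈ P.od).card → X a r s ∈ odT e
  star : ∀ {e f : ℕ}, T e →ₗ[𝕜] T f →ₗ[𝕜] T (e + f)
  star_X : ∀ {e f : ℕ} (a : Fin e → A) (r s : Fin e → Fin n)
      (c : Fin f → A) (t u : Fin f → Fin n),
    star (X a r s) (X c t u)
      = ∑ σ ∈ univ.filter (IsShuffle e f),
          act σ (X (Fin.append a c) (Fin.append r t) (Fin.append s u))
  nab : ∀ e f : ℕ, T (e + f) →ₗ[𝕜] TensorProduct 𝕜 (T e) (T f)
  nab_X : ∀ (e f : ℕ) (a : Fin (e + f) → A) (r s : Fin (e + f) → Fin n),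
    nab e f (X a r s)
      = (X (a ∘ Fin.castAdd f) (r ∘ Fin.castAdd f) (s ∘ Fin.castAdd f))
          ⊗ₜ[𝕜] (X (a ∘ Fin.natAdd e) (r ∘ Fin.natAdd e) (s ∘ Fin.natAdd e))

variable {n : ℕ} {T : ℕ → Type} [∀ e, NonUnitalRing (T e)] [∀ e, Module 𝕜 (T e)]

/-- `ξ^𝐚_{𝐫,𝐬}`, the signed sum of the pure tensors over the `S_d`-orbit of `(𝐚,𝐫,𝐬)`. -/
def xiH {P : GoodPair 𝕜 A β} (D : Tower 𝕜 A β n T P) (ord : LinearOrder (A × Fin n × Fin n))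
    {d : ℕ} (a : Fin d → A) (r s : Fin d → Fin n) : T d :=
  ∑ w ∈ (univ.image fun σ : Equiv.Perm (Fin d) => (a ∘ σ, r ∘ σ, s ∘ σ)),
    ((-1 : ℤ) ^ (ang P.od ord a r s + ang P.od ord w.1 w.2.1 w.2.2)) • D.X w.1 w.2.1 w.2.2

/-- `ξ^𝐛_{𝐫,𝐬}` for a word `𝐛` of basis elements. -/
def xiB {P : GoodPair 𝕜 A β} (D : Tower 𝕜 A β n T P) (ord : LinearOrder (A × Fin n × Fin n))
    {d : ℕ} (b : Fin d → β) (r s : Fin d → Fin n) : T d :=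
  xiH D ord (fun k => P.bas (b k)) r s

/-- `[𝐛,𝐫,𝐬]^b_{r,s}`, the multiplicity of an entry triple in a word triple. -/
def mco {n d : ℕ} (b : Fin d → β) (r s : Fin d → Fin n) (w : β × Fin n × Fin n) : ℕ :=
  (univ.filter fun k => ((b k, r k, s k) : β × Fin n × Fin n) = w).card

/-- `∏ ([𝐛,𝐫,𝐬]^b_{r,s})!` over the entry triples whose basis element satisfies `sel`
(e.g. `sel i = (part i = 1)` gives `[𝐛,𝐫,𝐬]^!_𝔠`). -/
def facSel (sel : β → Prop) {n d : ℕ} (b : Fin d → β) (r s : Fin d → Fin n) : ℕ :=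
  ∏ w ∈ ((univ.image fun k => ((b k, r k, s k) : β × Fin n × Fin n)).filter fun w => sel w.1),
    Nat.factorial (mco b r s w)

/-- `η^𝐛_{𝐫,𝐬} := [𝐛,𝐫,𝐬]^!_𝔠 • ξ^𝐛_{𝐫,𝐬}`. -/
def eta {P : GoodPair 𝕜 A β} (D : Tower 𝕜 A β n T P) (ord : LinearOrder (A × Fin n × Fin n))
    {d : ℕ} (b : Fin d → β) (r s : Fin d → Fin n) : T d :=
  facSel (fun i => P.part i = 1) b r s • xiB D ord b r s

/-- `S^A(n,d) = (M_n(A)^{⊗d})^{S_d}`, the invariants. -/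
def SchurS {P : GoodPair 𝕜 A β} (D : Tower 𝕜 A β n T P) (d : ℕ) : Submodule 𝕜 (T d) where
  carrier := {x | ∀ σ : Equiv.Perm (Fin d), D.act σ x = x}
  add_mem' := by
    intro x y hx hy σ
    rw [map_add, hx σ, hy σ]
  zero_mem' := by
    intro σ; exact map_zero _
  smul_mem' := by
    intro c x hx σ
    rw [map_smul, hx σ]

/-- The generalized Schur algebra `T^A_𝔞(n,d)`, the `𝕜`-span of the `η^𝐛_{𝐫,𝐬}`,
`(𝐛,𝐫,𝐬) ∈ Tri^B(n,d)`. -/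
def SchurT {P : GoodPair 𝕜 A β} (D : Tower 𝕜 A β n T P) (ord : LinearOrder (A × Fin n × Fin n))
    (d : ℕ) : Submodule 𝕜 (T d) :=
  Submodule.span 𝕜 {x | ∃ b r s, IsTriB P b r s ∧ x = eta D ord b r s}

/-- `S^𝔞(n,d) = (M_n(𝔞)^{⊗d})^{S_d} ⊆ S^A(n,d)`. -/
def SchurA {P : GoodPair 𝕜 A β} (D : Tower 𝕜 A β n T P) (d : ℕ) : Submodule 𝕜 (T d) :=
  Submodule.span 𝕜 {x | ∃ a r s, (∀ k, a k ∈ P.aa) ∧ x = D.X a r s} ⊓ SchurS D d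

/-- `ξ^f = E^f ⊗ ⋯ ⊗ E^f` for `f ∈ A`. -/
def xiIdem {P : GoodPair 𝕜 A β} (D : Tower 𝕜 A β n T P) (f : A) (d : ℕ) : T d :=
  ∑ r : Fin d → Fin n, D.X (fun _ => f) r r

/-- Transport along an equality of degrees. -/
def tcast {e f : ℕ} (h : e = f) : T e ≃ₗ[𝕜] T f := by
  subst h; exact LinearEquiv.refl 𝕜 (T e)

/-- Iterated `*`-product `x_1 * x_2 * ⋯ * x_d` of degree-one pure tensors read off from a
word (associated to the left). -/
def starIter {P : GoodPair 𝕜 A β} (D : Tower 𝕜 A β n T P) :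
    ∀ (e : ℕ), (Fin e → A) → (Fin e → Fin n) → (Fin e → Fin n) → T e
  | 0, _, _, _ => D.X Fin.elim0 Fin.elim0 Fin.elim0
  | (e + 1), a, r, s =>
      D.star (starIter D e (a ∘ Fin.castSucc) (r ∘ Fin.castSucc) (s ∘ Fin.castSucc))
        (D.X (fun _ : Fin 1 => a (Fin.last e)) (fun _ => r (Fin.last e)) (fun _ => s (Fin.last e)))

/-- Iterated `*`-product of blockwise given elements. -/
def starBlocks {P : GoodPair 𝕜 A β} (D : Tower 𝕜 A β n T P) :
    ∀ (q : ℕ) (sz : Fin q → ℕ), (∀ m, T (sz m)) → T (∑ m, sz m)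
  | 0, sz, _ => cast (congrArg T (Fin.sum_univ_zero sz).symm) (D.X Fin.elim0 Fin.elim0 Fin.elim0)
  | (q + 1), sz, x =>
      cast (congrArg T (Fin.sum_univ_castSucc sz).symm)
        (D.star (starBlocks D q (fun m => sz m.castSucc) (fun m => x m.castSucc))
          (x (Fin.last q)))

/-- Concatenation of a tuple of words of lengths `sz 0, …, sz (q-1)`. -/
def concatB {α : Type} : ∀ {q : ℕ} (sz : Fin q → ℕ), (∀ m, Fin (sz m) → α) → Fin (∑ m, sz m) → α
  | 0, sz, _ => fun k => Fin.elim0 (cast (congrArg Fin (Fin.sum_univ_zero sz)) k)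
  | (q + 1), sz, f => fun k =>
      Fin.append (concatB (fun m => sz m.castSucc) (fun m => f m.castSucc)) (f (Fin.last q))
        (cast (congrArg Fin (Fin.sum_univ_castSucc sz)) k)

/-- A triple of words `(𝐛,𝐫,𝐬)`. -/
abbrev WordTriple (β : Type) (n d : ℕ) : Type :=
  (Fin d → β) × (Fin d → Fin n) × (Fin d → Fin n)

/-- The diagonal right place-permutation action on triples of words. -/
def wAct {d : ℕ} (w : WordTriple β n d) (σ : Equiv.Perm (Fin d)) : WordTriple β n d :=
  (w.1 ∘ σ, w.2.1 ∘ σ, w.2.2 ∘ σ)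

/-- The `k`-th entry triple `(b_k, r_k, s_k)` (with `b_k` realized in `A`). -/
def entryAt (P : GoodPair 𝕜 A β) {n d : ℕ} (w : WordTriple β n d) (k : Fin d) :
    A × Fin n × Fin n :=
  (P.bas (w.1 k), w.2.1 k, w.2.2 k)

/-- The lexicographic order on triples of words induced by the total order `ord`. -/
def wordLE (P : GoodPair 𝕜 A β) {n : ℕ} (ord : LinearOrder (A × Fin n × Fin n)) {d : ℕ}
    (w w' : WordTriple β n d) : Prop :=
  (∀ k, entryAt P w k = entryAt P w' k) ∨
    ∃ l : Fin d, (∀ k, k < l → entryAt P w k = entryAt P w' k) ∧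
      ord.lt (entryAt P w l) (entryAt P w' l)

/-- `Tri^B_0(n,d)`: the lexicographically minimal representatives of the `S_d`-orbits on
`Tri^B(n,d)`. -/
def IsTri0 (P : GoodPair 𝕜 A β) {n : ℕ} (ord : LinearOrder (A × Fin n × Fin n)) {d : ℕ}
    (w : WordTriple β n d) : Prop :=
  IsTriB P w.1 w.2.1 w.2.2 ∧ ∀ σ : Equiv.Perm (Fin d), wordLE P ord w (wAct w σ)

/-- The first `l` letters of each word. -/
def firstW {d : ℕ} (l : ℕ) (hl : l ≤ d) (w : WordTriple β n d) : WordTriple β n l :=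
  (fun k => w.1 ⟨k, lt_of_lt_of_le k.isLt hl⟩,
   fun k => w.2.1 ⟨k, lt_of_lt_of_le k.isLt hl⟩,
   fun k => w.2.2 ⟨k, lt_of_lt_of_le k.isLt hl⟩)

/-- The last `d - l` letters of each word. -/
def lastW {d : ℕ} (l : ℕ) (hl : l ≤ d) (w : WordTriple β n d) : WordTriple β n (d - l) :=
  (fun k => w.1 ⟨l + (k : ℕ), by have := k.isLt; omega⟩,
   fun k => w.2.1 ⟨l + (k : ℕ), by have := k.isLt; omega⟩,
   fun k => w.2.2 ⟨l + (k : ℕ), by have := k.isLt; omega⟩)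

/-- Concatenation of words. -/
def appF {α : Type} {d : ℕ} (l : ℕ) (hl : l ≤ d) (f : Fin l → α) (g : Fin (d - l) → α) :
    Fin d → α :=
  fun k => if hk : (k : ℕ) < l then f ⟨k, hk⟩ else g ⟨(k : ℕ) - l, by have := k.isLt; omega⟩

/-- Concatenation `T¹T²` of two triples of words. -/
def concatW {d : ℕ} (l : ℕ) (hl : l ≤ d) (p : WordTriple β n l × WordTriple β n (d - l)) :
    WordTriple β n d :=
  (appF l hl p.1.1 p.2.1, appF l hl p.1.2.1 p.2.2.1, appF l hl p.1.2.2 p.2.2.2)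

/-- `Spl_l(T)`, the set of `l`-splits of `T ∈ Tri^B_0(n,d)`. -/
def splitsF (P : GoodPair 𝕜 A β) {n : ℕ} (ord : LinearOrder (A × Fin n × Fin n)) {d : ℕ}
    (l : ℕ) (hl : l ≤ d) (w : WordTriple β n d) :
    Finset (WordTriple β n l × WordTriple β n (d - l)) :=
  (univ.image fun σ : Equiv.Perm (Fin d) =>
      (firstW l hl (wAct w σ), lastW l hl (wAct w σ))).filter
    fun p => IsTri0 P ord p.1 ∧ IsTri0 P ord p.2

/-- The number of inversions (= Coxeter length) of a permutation. -/
def invCount {d : ℕ} (σ : Equiv.Perm (Fin d)) : ℕ :=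
  (univ.filter fun kl : Fin d × Fin d => kl.1 < kl.2 ∧ σ kl.2 < σ kl.1).card

/-- The submodule `{x | x·ε = x}` (for an idempotent `ε` this is `R·ε`). -/
def rfix (𝕜 : Type) {R : Type} [CommRing 𝕜] [NonUnitalRing R] [Module 𝕜 R]
    [IsScalarTower 𝕜 R R] (ε : R) : Submodule 𝕜 R where
  carrier := {x | x * ε = x}
  add_mem' := by
    intro x y hx hy
    simp only [Set.mem_setOf_eq] at *
    rw [add_mul, hx, hy]
  zero_mem' := by simp
  smul_mem' := by
    intro c x hx
    simp only [Set.mem_setOf_eq] at *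
    rw [smul_mul_assoc, hx]

/-- Right `εSε`-module endomorphism property for a map of `S·ε = M ⊓ rfix ε`,
where `S` is the (possibly non-unital) algebra realized as the submodule `M` of `R`. -/
def IsEquivar (𝕜 : Type) {R : Type} [CommRing 𝕜] [NonUnitalRing R] [Module 𝕜 R]
    [IsScalarTower 𝕜 R R] (M : Submodule 𝕜 R) (ε : R)
    (f : ↥(M ⊓ rfix 𝕜 ε) →ₗ[𝕜] ↥(M ⊓ rfix 𝕜 ε)) : Prop :=
  ∀ (x : ↥(M ⊓ rfix 𝕜 ε)) (c : R), c ∈ M → ε * c * ε = c →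
    ∀ h : (x : R) * c ∈ M ⊓ rfix 𝕜 ε,
      ((f ⟨(x : R) * c, h⟩ : ↥(M ⊓ rfix 𝕜 ε)) : R) = (f x : R) * c

/-- `ε` is a *double centralizer idempotent* for the algebra `M ⊆ R`: the left
multiplication map `λ : M → End_{εMε}(Mε)` is bijective. -/
def IsDCI (𝕜 : Type) {R : Type} [CommRing 𝕜] [NonUnitalRing R] [Module 𝕜 R]
    [IsScalarTower 𝕜 R R] (M : Submodule 𝕜 R) (ε : R) : Prop :=
  (∀ s ∈ M, ∀ s' ∈ M, (∀ x ∈ M ⊓ rfix 𝕜 ε, s * x = s' * x) → s = s') ∧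
  (∀ f : ↥(M ⊓ rfix 𝕜 ε) →ₗ[𝕜] ↥(M ⊓ rfix 𝕜 ε), IsEquivar 𝕜 M ε f →
    ∃ s ∈ M, ∀ x : ↥(M ⊓ rfix 𝕜 ε), (f x : R) = s * (x : R))

/-!
The algebra `T^A_𝔞(n,d)` has a description in which no order on the letters occurs: it consists of
the invariants `x` whose coefficient at each word `w` is divisible by `[w]^!_𝔠`, and vanishes
unless `w ∈ Tri^B(n,d)`. Both conditions pass from `x` and `y` to `x * y`, whose coefficient at
`w` is a sum of contributions of pairs `(u, v)` of words in `Tri^B(n,d)`.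

If `w ∉ Tri^B(n,d)`, then two positions `k ≠ l` of `w` carry the same odd letter. Swapping `k` and
`l` is a sign-reversing involution on the pairs. In a fixed pair both words have an even letter at
`k`, so the product there is even and does not involve the letter of `w`: the pair contributes `0`.

The Young subgroup of `w` permuting equal letters of `B_𝔠` has order `[w]^!_𝔠` and acts on the
pairs, with contributions constant on orbits. Unless `(u, v)` contributes `0`, its stabilizer
permutes only positions at which `u` or `v` has a letter of `B_𝔠`: at a position of `w` in `B_𝔠`
where neither has, either one of the two letters is odd, so the position is fixed, or both are in
`B_𝔞`, so the contribution vanishes because `𝔞 𝔞 ⊆ 𝔞`. Hence the order of the stabilizer divides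
`[u]^!_𝔠 [v]^!_𝔠`, which divides the contribution, and the contributions of an orbit add up to a
multiple of `[w]^!_𝔠`.
-/

-- It makes `S_d` act on triples of words from the left, `σ • w` being `wAct w σ⁻¹`.
attribute [local instance] arrowAction

section SignCounts

theorem even_card_filter_add_card_filter_add_card_filter_xor {α : Type*} (s : Finset α)
    (p q : α → Prop) : Even (#{a ∈ s | p a} + #{a ∈ s | q a} + #{a ∈ s | Xor (p a) (q a)}) := by
  simp only [card_filter, ← sum_add_distrib]
  refine even_sum _ fun a _ => ?_
  by_cases hp : p a <;> by_cases hq : q a <;> simp [hp, hq, Xor]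

variable {α : Type*} [Fintype α] [LinearOrder α]

theorem two_mul_card_filter_lt {r : α → α → Prop} (hr : ∀ k l, k ≠ l → (r k l ↔ r l k)) :
    2 * #{p : α × α | p.1 < p.2 ∧ r p.1 p.2} = #{p : α × α | p.1 ≠ p.2 ∧ r p.1 p.2} := by
  have hswap : #{p : α × α | p.1 < p.2 ∧ r p.1 p.2} = #{p : α × α | p.2 < p.1 ∧ r p.1 p.2} :=
    card_equiv (Equiv.prodComm α α) fun p => by
      simpa using fun h => hr p.1 p.2 (ne_of_lt h)
  rw [two_mul]
  nth_rw 2 [hswap]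
  rw [← card_union_of_disjoint (disjoint_filter.mpr fun p _ h h' => lt_asymm h.1 h'.1),
    ← filter_or]
  simp only [← or_and_right, lt_or_lt_iff_ne]

theorem card_filter_lt_comp_perm {r : α → α → Prop} (hr : ∀ k l, k ≠ l → (r k l ↔ r l k))
    (σ : Equiv.Perm α) :
    #{p : α × α | p.1 < p.2 ∧ r (σ p.1) (σ p.2)} = #{p : α × α | p.1 < p.2 ∧ r p.1 p.2} := by
  have hne : #{p : α × α | p.1 ≠ p.2 ∧ r (σ p.1) (σ p.2)} = #{p : α × α | p.1 ≠ p.2 ∧ r p.1 p.2} :=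
    card_equiv (Equiv.prodCongr σ σ) fun p => by simp
  have hσ := two_mul_card_filter_lt (r := fun k l => r (σ k) (σ l))
    fun k l hkl => hr _ _ (σ.injective.ne hkl)
  have hid := two_mul_card_filter_lt hr
  omega

theorem even_card_inversions_comp_perm {odd : α → Prop} {R : α → α → Prop}
    (hR : ∀ k l, k ≠ l → odd k → odd l → (R k l ↔ ¬ R l k)) (σ : Equiv.Perm α) :
    Even (#{p : α × α | p.1 < p.2 ∧ odd p.1 ∧ odd p.2 ∧ R p.2 p.1} +
      #{p : α × α | p.1 < p.2 ∧ σ⁻¹ p.2 < σ⁻¹ p.1 ∧ odd p.1 ∧ odd p.2} +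
      #{p : α × α | p.1 < p.2 ∧ odd (σ p.1) ∧ odd (σ p.2) ∧ R (σ p.2) (σ p.1)}) := by
  obtain ⟨r, hr_iff⟩ : ∃ r : α → α → Prop,
      ∀ k l, r k l ↔ odd k ∧ odd l ∧ Xor (R l k) (σ⁻¹ l < σ⁻¹ k) := ⟨_, fun _ _ => Iff.rfl⟩
  have hr : ∀ k l, k ≠ l → (r k l ↔ r l k) := by
    intro k l hkl
    have hσ : σ⁻¹ l < σ⁻¹ k ↔ ¬ σ⁻¹ k < σ⁻¹ l :=
      ⟨lt_asymm, fun h => lt_of_le_of_ne (not_lt.mp h) (σ⁻¹.injective.ne hkl.symm)⟩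
    simp only [hr_iff, hσ]
    grind [Xor]
  have hcomp : #{p : α × α | p.1 < p.2 ∧ odd (σ p.1) ∧ odd (σ p.2) ∧ R (σ p.2) (σ p.1)} =
      #{p : α × α | p.1 < p.2 ∧ r p.1 p.2} := by
    rw [← card_filter_lt_comp_perm hr σ]
    refine congrArg card (filter_congr fun p _ => and_congr_right fun hp => ?_)
    simp [hr_iff, Xor, hp.le]
  have hxor : #{p : α × α | p.1 < p.2 ∧ r p.1 p.2} =
      #{p : α × α | Xor (p.1 < p.2 ∧ odd p.1 ∧ odd p.2 ∧ R p.2 p.1)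
        (p.1 < p.2 ∧ σ⁻¹ p.2 < σ⁻¹ p.1 ∧ odd p.1 ∧ odd p.2)} :=
    congrArg card (filter_congr fun p _ => by rw [hr_iff]; grind [Xor])
  rw [hcomp, hxor]
  convert even_card_filter_add_card_filter_add_card_filter_xor (univ : Finset (α × α))
    (fun p => p.1 < p.2 ∧ odd p.1 ∧ odd p.2 ∧ R p.2 p.1)
    (fun p => p.1 < p.2 ∧ σ⁻¹ p.2 < σ⁻¹ p.1 ∧ odd p.1 ∧ odd p.2)

theorem odd_card_inversions_swap {odd : α → Prop} {k l : α} (hkl : k < l) (hk : odd k)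
    (hl : odd l) :
    Odd #{p : α × α | p.1 < p.2 ∧ (Equiv.swap k l)⁻¹ p.2 < (Equiv.swap k l)⁻¹ p.1 ∧
      odd p.1 ∧ odd p.2} := by
  set τ := Equiv.swap k l
  set I : Finset (α × α) := {p | p.1 < p.2 ∧ τ⁻¹ p.2 < τ⁻¹ p.1 ∧ odd p.1 ∧ odd p.2} with hI
  have hmem : ∀ p, p ∈ I ↔ p.1 < p.2 ∧ τ p.2 < τ p.1 ∧ odd p.1 ∧ odd p.2 := by
    intro p
    rw [hI, mem_filter, show τ⁻¹ = τ from Equiv.swap_inv k l]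
    simp only [mem_univ, true_and]
  have hτ : ∀ i, τ (τ i) = i := Equiv.swap_apply_self k l
  have hkl_mem : (k, l) ∈ I := by simp [hmem, τ, hkl, hk, hl]
  have hodd : ∀ i, odd i → odd (τ i) := by
    intro i hi
    simp only [τ, Equiv.swap_apply_def]
    split_ifs <;> assumption
  have heven : ((#(I.erase (k, l)) : ℕ) : ZMod 2) = 0 := by
    rw [← nsmul_one, ← sum_const]
    refine sum_involution (fun p _ => (τ p.2, τ p.1)) (fun _ _ => by decide) ?_ ?_ ?_
    · rintro ⟨i, j⟩ hp - hfix
      grind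
    · rintro ⟨i, j⟩ hp
      grind
    · intros
      simp [hτ]
  rw [← card_erase_add_one hkl_mem]
  exact ((ZMod.natCast_eq_zero_iff_even).mp heven).add_one

end SignCounts

section GroupActions

open MulAction

theorem card_dvd_sum_of_card_stabilizer_dvd {Γ ι R : Type*} [Group Γ] [Finite Γ] [MulAction Γ ι]
    [CommSemiring R] {f : ι → R} (hf : ∀ (g : Γ) i, f (g • i) = f i) {s : Finset ι}
    (hs : ∀ (g : Γ), ∀ i ∈ s, g • i ∈ s)
    (hstab : ∀ i ∈ s, (Nat.card (stabilizer Γ i) : R) ∣ f i) :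
    (Nat.card Γ : R) ∣ ∑ i ∈ s, f i := by
  rw [sum_partition (orbitRel Γ ι)]
  refine dvd_sum fun O hO => ?_
  obtain ⟨i, hi, rfl⟩ := mem_image.mp hO
  have horbit : (({j ∈ s | (Quotient.mk (orbitRel Γ ι) j) = Quotient.mk _ i} : Finset ι) : Set ι) =
      orbit Γ i := by
    ext j
    simp only [coe_filter, Set.mem_ofPred_eq, Quotient.eq, orbitRel_apply]
    exact and_iff_right_of_imp fun ⟨g, hg⟩ => hg ▸ hs g i hi
  have hconst : ∀ j ∈ ({j ∈ s | (Quotient.mk (orbitRel Γ ι) j) = Quotient.mk _ i} : Finset ι),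
      f j = f i := by
    intro j hj
    obtain ⟨g, rfl⟩ := horbit.subset hj
    exact hf g i
  rw [sum_congr rfl hconst, sum_const, nsmul_eq_mul, ← Set.ncard_coe_finset, horbit,
    ← Nat.card_coe_set_eq, ← Nat.card_congr (orbitProdStabilizerEquivGroup Γ i), Nat.card_prod,
    Nat.cast_mul]
  exact mul_dvd_mul_left _ (hstab i hi)

/-- The part of a permutation representation `φ` living on a `φ`-invariant set: `φ g` acts on the
points satisfying `p` and all other points are fixed. -/
def restrictHom {Γ α : Type*} [Group Γ] (φ : Γ →* Equiv.Perm α) (p : α → Prop)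
    (hp : ∀ g a, p (φ g a) ↔ p a) : Γ →* Equiv.Perm α :=
  Equiv.Perm.ofSubtype.comp
    { toFun := fun g => (φ g).subtypePerm (hp g)
      map_one' := by ext; simp
      map_mul' := fun g h => Equiv.ext fun _ => Subtype.ext (by simp; rfl) }

theorem restrictHom_of_mem {Γ α : Type*} [Group Γ] {φ : Γ →* Equiv.Perm α} {p : α → Prop}
    (hp : ∀ g a, p (φ g a) ↔ p a) (g : Γ) {a : α} (ha : p a) :
    restrictHom φ p hp g a = φ g a :=
  Equiv.Perm.ofSubtype_subtypePerm_of_mem (hp g) ha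

theorem restrictHom_of_not_mem {Γ α : Type*} [Group Γ] {φ : Γ →* Equiv.Perm α} {p : α → Prop}
    (hp : ∀ g a, p (φ g a) ↔ p a) (g : Γ) {a : α} (ha : ¬ p a) :
    restrictHom φ p hp g a = a :=
  Equiv.Perm.ofSubtype_subtypePerm_of_not_mem (hp g) ha

theorem card_dvd_card_mul_card_of_restrictHom {Γ α : Type*} [Group Γ] {φ : Γ →* Equiv.Perm α}
    (hφ : Function.Injective φ) {p : α → Prop} (hp : ∀ g a, p (φ g a) ↔ p a)
    {G₁ G₂ : Subgroup (Equiv.Perm α)} (h₁ : ∀ g, restrictHom φ p hp g ∈ G₁)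
    (h₂ : ∀ g, restrictHom φ (¬ p ·) (fun g a => not_congr (hp g a)) g ∈ G₂) :
    Nat.card Γ ∣ Nat.card G₁ * Nat.card G₂ := by
  let ψ : Γ →* G₁ × G₂ := ((restrictHom φ p hp).codRestrict G₁ h₁).prod
    ((restrictHom φ (¬ p ·) fun g a => not_congr (hp g a)).codRestrict G₂ h₂)
  have hψ : Function.Injective ψ := by
    intro g h hgh
    refine hφ (Equiv.ext fun a => ?_)
    by_cases ha : p a
    · rw [← restrictHom_of_mem hp g ha, ← restrictHom_of_mem hp h ha]
      exact congrArg (fun x : G₁ × G₂ => x.1.1 a) hgh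
    · have hnp : ∀ g a, ¬ p (φ g a) ↔ ¬ p a := fun g a => not_congr (hp g a)
      rw [← restrictHom_of_mem (p := (¬ p ·)) hnp g ha,
        ← restrictHom_of_mem (p := (¬ p ·)) hnp h ha]
      exact congrArg (fun x : G₁ × G₂ => x.2.1 a) hgh
  rw [← Nat.card_prod]
  exact Subgroup.card_dvd_of_injective ψ hψ

theorem mem_stabilizer_fun_iff {α ι : Type*} {f : α → ι} {σ : Equiv.Perm α} :
    σ ∈ stabilizer (Equiv.Perm α) f ↔ f ∘ σ = f := by
  rw [← inv_mem_iff (x := σ), mem_stabilizer_iff]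
  rfl

theorem card_stabilizer_fun {α ι : Type*} [Fintype α] [DecidableEq ι] (f : α → ι) {s : Finset ι}
    (hs : ∀ a, f a ∈ s) :
    Nat.card (stabilizer (Equiv.Perm α) f) = ∏ i ∈ s, (#{a | f a = i}).factorial := by
  have hcard : Nat.card (stabilizer (Equiv.Perm α) f) =
      ∏ i ∈ univ.image f, (#{a | f a = i}).factorial := by
    rw [Nat.card_congr (Equiv.subtypeEquivRight fun σ => mem_stabilizer_fun_iff (f := f)),
      Nat.card_eq_fintype_card, DomMulAct.stabilizer_card']
    simp only [Fintype.card_subtype]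
  rw [hcard]
  refine prod_subset (image_subset_iff.mpr fun a _ => hs a) fun i _ hi => ?_
  rw [filter_eq_empty_iff.mpr fun a _ ha => hi (mem_image.mpr ⟨a, mem_univ a, ha⟩), card_empty,
    Nat.factorial_zero]

end GroupActions

namespace GoodPair

variable (P : GoodPair 𝕜 A β)

theorem part_eq_zero_or_one_or_two (i : β) : P.part i = 0 ∨ P.part i = 1 ∨ P.part i = 2 := by
  generalize P.part i = p
  fin_cases p <;> simp

theorem cc_le_ev : P.cc ≤ P.ev := P.aa_sup_cc ▸ le_sup_right

variable {P} in
theorem bas_mem_ev {i : β} (hi : P.part i ≠ 2) : P.bas i ∈ P.ev := by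
  rcases P.part_eq_zero_or_one_or_two i with h | h | h
  · exact P.aa_le_ev (P.bas_mem_aa i h)
  · exact P.cc_le_ev (P.bas_mem_cc i h)
  · exact absurd h hi

theorem bas_homog (i : β) : Homog P (P.bas i) := by
  by_cases hi : P.part i = 2
  · exact Or.inr (P.bas_mem_od i hi)
  · exact Or.inl (bas_mem_ev hi)

variable {P} in
theorem eq_zero_of_mem_ev_of_mem_od {a : A} (hev : a ∈ P.ev) (hod : a ∈ P.od) : a = 0 :=
  Submodule.disjoint_def.mp P.compl.disjoint a hev hod

variable {P} in
theorem bas_mem_od_iff [Nontrivial 𝕜] {i : β} : P.bas i ∈ P.od ↔ P.part i = 2 := by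
  refine ⟨fun hod => ?_, P.bas_mem_od i⟩
  by_contra hi
  exact P.bas.ne_zero i (eq_zero_of_mem_ev_of_mem_od (bas_mem_ev hi) hod)

theorem span_bas_even : Submodule.span 𝕜 (P.bas '' {i | P.part i ≠ 2}) = P.ev := by
  have hle : Submodule.span 𝕜 (P.bas '' {i | P.part i ≠ 2}) ≤ P.ev :=
    Submodule.span_le.mpr (Set.image_subset_iff.mpr fun _ hi => bas_mem_ev hi)
  refine eq_of_le_of_inf_le_of_le_sup hle (z := P.od) (P.compl.inf_eq_bot ▸ bot_le) ?_
  refine le_top.trans (P.bas.span_eq ▸ Submodule.span_le.mpr ?_)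
  rintro _ ⟨i, rfl⟩
  by_cases hi : P.part i = 2
  · exact Submodule.mem_sup_right (P.bas_mem_od i hi)
  · exact Submodule.mem_sup_left (Submodule.subset_span ⟨i, hi, rfl⟩)

theorem span_bas_aa : Submodule.span 𝕜 (P.bas '' {i | P.part i = 0}) = P.aa := by
  have hle : Submodule.span 𝕜 (P.bas '' {i | P.part i = 0}) ≤ P.aa :=
    Submodule.span_le.mpr (Set.image_subset_iff.mpr P.bas_mem_aa)
  refine eq_of_le_of_inf_le_of_le_sup hle (z := P.cc) (P.aa_inf_cc ▸ bot_le) ?_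
  refine P.aa_le_ev.trans (P.span_bas_even ▸ Submodule.span_le.mpr ?_)
  rintro _ ⟨i, hi, rfl⟩
  rcases P.part_eq_zero_or_one_or_two i with h | h | h
  · exact Submodule.mem_sup_left (Submodule.subset_span ⟨i, h, rfl⟩)
  · exact Submodule.mem_sup_right (P.bas_mem_cc i h)
  · exact absurd h hi

variable {P}

theorem repr_eq_zero_of_mem_ev {a : A} (ha : a ∈ P.ev) {i : β} (hi : P.part i = 2) :
    P.bas.repr a i = 0 := by
  rw [← P.span_bas_even, P.bas.mem_span_image] at ha
  exact Finsupp.notMem_support_iff.mp fun hmem => ha hmem hi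

theorem repr_eq_zero_of_mem_aa {a : A} (ha : a ∈ P.aa) {i : β} (hi : P.part i ≠ 0) :
    P.bas.repr a i = 0 := by
  rw [← P.span_bas_aa, P.bas.mem_span_image] at ha
  exact Finsupp.notMem_support_iff.mp fun hmem => hi (ha hmem)

end GoodPair

section Words

open MulAction

variable {d : ℕ}

/-- The `k`-th letter `(b_k, r_k, s_k)` of a triple of words. -/
def letters (w : WordTriple β n d) (k : Fin d) : β × Fin n × Fin n :=
  (w.1 k, w.2.1 k, w.2.2 k)

theorem letters_injective : Function.Injective (letters : WordTriple β n d → _) := by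
  intro w v h
  have hk := fun k => congrFun h k
  simp only [letters, Prod.mk.injEq] at hk
  exact Prod.ext (funext fun k => (hk k).1)
    (Prod.ext (funext fun k => (hk k).2.1) (funext fun k => (hk k).2.2))

theorem letters_wAct (w : WordTriple β n d) (σ : Equiv.Perm (Fin d)) (k : Fin d) :
    letters (wAct w σ) k = letters w (σ k) :=
  rfl

theorem wAct_eq_iff {w v : WordTriple β n d} {σ : Equiv.Perm (Fin d)} :
    wAct w σ = v ↔ ∀ k, letters w (σ k) = letters v k :=
  letters_injective.eq_iff.symm.trans funext_iff

theorem wAct_swap_eq_self_iff {w : WordTriple β n d} {k l : Fin d} :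
    wAct w (Equiv.swap k l) = w ↔ letters w k = letters w l := by
  refine wAct_eq_iff.trans ⟨fun h => by simpa using (h k).symm, fun h i => ?_⟩
  rw [Equiv.swap_apply_def]
  grind

theorem mem_orbit_iff_exists_wAct {u w : WordTriple β n d} :
    w ∈ orbit (Equiv.Perm (Fin d)) u ↔ ∃ σ, wAct u σ = w :=
  ⟨fun ⟨σ, hσ⟩ => ⟨σ⁻¹, hσ⟩, fun ⟨σ, hσ⟩ => ⟨σ⁻¹, by rw [← hσ]; rfl⟩⟩

theorem wAct_mem_orbit (u : WordTriple β n d) (σ : Equiv.Perm (Fin d)) :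
    wAct u σ ∈ orbit (Equiv.Perm (Fin d)) u :=
  mem_orbit_iff_exists_wAct.mpr ⟨σ, rfl⟩

variable (P : GoodPair 𝕜 A β)

/-- Membership of a triple of words in `Tri^B(n,d)`. -/
abbrev IsTriWord (w : WordTriple β n d) : Prop :=
  IsTriB P w.1 w.2.1 w.2.2

/-- `[𝐛,𝐫,𝐬]^!_𝔠`, the product of the factorials of the multiplicities of the letters in `B_𝔠`. -/
def cFactorial (w : WordTriple β n d) : ℕ :=
  facSel (fun i => P.part i = 1) w.1 w.2.1 w.2.2

variable {P}

theorem cFactorial_eq_prod (w : WordTriple β n d) :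
    cFactorial P w =
      ∏ x ∈ univ.image (letters w) with P.part x.1 = 1, (#{k | letters w k = x}).factorial := by
  unfold cFactorial facSel
  convert rfl <;> rfl

theorem IsTriWord.wAct {w : WordTriple β n d} (hw : IsTriWord P w) (σ : Equiv.Perm (Fin d)) :
    IsTriWord P (wAct w σ) :=
  fun k l hkl h => hw (σ k) (σ l) (σ.injective.ne hkl) h

theorem cFactorial_wAct (w : WordTriple β n d) (σ : Equiv.Perm (Fin d)) :
    cFactorial P (wAct w σ) = cFactorial P w := by
  have himage : univ.image (letters (wAct w σ)) = univ.image (letters w) := by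
    ext x
    simpa [letters_wAct] using (σ.surjective.exists (p := fun k => letters w k = x)).symm
  have hcard : ∀ x, #{k | letters (wAct w σ) k = x} = #{k | letters w k = x} :=
    fun x => card_equiv σ fun k => by rw [mem_filter, mem_filter, letters_wAct]; simp
  simp only [cFactorial_eq_prod, himage, hcard]

theorem cFactorial_eq_one {w : WordTriple β n d} (hw : ∀ k, P.part (w.1 k) ≠ 1) :
    cFactorial P w = 1 := by
  rw [cFactorial_eq_prod]
  refine prod_eq_one fun x hx => ?_
  obtain ⟨hx, hpart⟩ := mem_filter.mp hx
  obtain ⟨k, -, rfl⟩ := mem_image.mp hx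
  exact absurd hpart (hw k)

end Words

section Signs

variable {d : ℕ} (P : GoodPair 𝕜 A β) (ord : LinearOrder (A × Fin n × Fin n))

/-- The sign `(-1)^⟨σ;𝐛⟩` by which the place permutation `σ` acts on the pure tensor of `w`. -/
def permSign (σ : Equiv.Perm (Fin d)) (w : WordTriple β n d) : 𝕜 :=
  (-1) ^ sgnc P.od σ fun k => P.bas (w.1 k)

/-- The sign `(-1)^⟨𝐛,𝐫,𝐬⟩` of sorting `w` with respect to `ord`. -/
def orderSign (w : WordTriple β n d) : 𝕜 :=
  (-1) ^ ang P.od ord (fun k => P.bas (w.1 k)) w.2.1 w.2.2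

variable {P}

theorem permSign_mul_self (σ : Equiv.Perm (Fin d)) (w : WordTriple β n d) :
    permSign P σ w * permSign P σ w = 1 := by
  rw [permSign, ← mul_pow, neg_mul_neg, one_mul, one_pow]

theorem orderSign_mul_self (w : WordTriple β n d) :
    orderSign P ord w * orderSign P ord w = 1 := by
  rw [orderSign, ← mul_pow, neg_mul_neg, one_mul, one_pow]

theorem permSign_eq_orderSign_mul_orderSign [Nontrivial 𝕜] {w : WordTriple β n d}
    (hw : IsTriWord P w) (σ : Equiv.Perm (Fin d)) :
    permSign P σ w = orderSign P ord w * orderSign P ord (wAct w σ) := by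
  have hlt : ∀ k l, k ≠ l → P.bas (w.1 k) ∈ P.od → P.bas (w.1 l) ∈ P.od →
      (ord.lt (entryAt P w k) (entryAt P w l) ↔ ¬ ord.lt (entryAt P w l) (entryAt P w k)) := by
    intro k l hkl hk _
    have hne : entryAt P w k ≠ entryAt P w l := by
      intro h
      simp only [entryAt, Prod.mk.injEq, P.bas.injective.eq_iff] at h
      exact hw k l hkl (by rw [h.1, h.2.1, h.2.2]) (GoodPair.bas_mem_od_iff.mp hk)
    exact ⟨lt_asymm, fun h => lt_of_le_of_ne (not_lt.mp h) hne⟩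
  have heven : Even (ang P.od ord (fun k => P.bas (w.1 k)) w.2.1 w.2.2 +
      sgnc P.od σ (fun k => P.bas (w.1 k)) +
      ang P.od ord (fun k => P.bas (w.1 (σ k))) (w.2.1 ∘ σ) (w.2.2 ∘ σ)) := by
    unfold ang sgnc
    convert even_card_inversions_comp_perm hlt σ <;> rfl
  rw [permSign, orderSign, orderSign, ← pow_add]
  exact neg_one_pow_congr (by rw [add_right_comm, Nat.even_add] at heven; exact heven.symm)

theorem permSign_swap_eq_neg_one {w : WordTriple β n d} {k l : Fin d} (hkl : k ≠ l)
    (hk : P.part (w.1 k) = 2) (hl : P.part (w.1 l) = 2) :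
    permSign P (Equiv.swap k l) w = -1 := by
  wlog h : k < l generalizing k l
  · rw [Equiv.swap_comm]
    exact this hkl.symm hl hk (lt_of_le_of_ne (not_lt.mp h) hkl.symm)
  refine Odd.neg_one_pow ?_
  unfold sgnc
  convert odd_card_inversions_swap (odd := fun i => P.bas (w.1 i) ∈ P.od) h
    (P.bas_mem_od _ hk) (P.bas_mem_od _ hl)

theorem permSign_eq_one [Nontrivial 𝕜] {w : WordTriple β n d} {σ : Equiv.Perm (Fin d)}
    (h : ∀ k, P.part (w.1 k) = 2 → σ k = k) : permSign P σ w = 1 := by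
  have hinv : ∀ k, P.bas (w.1 k) ∈ P.od → σ⁻¹ k = k := fun k hk =>
    Equiv.Perm.inv_eq_iff_eq.mpr (h k (GoodPair.bas_mem_od_iff.mp hk)).symm
  rw [permSign, sgnc, filter_eq_empty_iff.mpr, card_empty, pow_zero]
  rintro ⟨k, l⟩ - ⟨hkl, hlt, hk, hl⟩
  rw [hinv k hk, hinv l hl] at hlt
  exact lt_asymm hkl hlt

end Signs

namespace Tower

variable {P : GoodPair 𝕜 A β} (D : Tower 𝕜 A β n T P) {d : ℕ}

theorem act_bas (σ : Equiv.Perm (Fin d)) (w : WordTriple β n d) :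
    D.act σ (D.bas d w) = permSign P σ w • D.bas d (wAct w σ) := by
  rw [D.bas_eq d w.1, D.act_X σ _ _ _ fun k => P.bas_homog (w.1 k), wAct, D.bas_eq,
    ← Int.cast_smul_eq_zsmul 𝕜, permSign]
  push_cast
  rfl

theorem repr_act (σ : Equiv.Perm (Fin d)) (x : T d) (w : WordTriple β n d) :
    (D.bas d).repr (D.act σ x) (wAct w σ) = permSign P σ w * (D.bas d).repr x w := by
  have hinj : ∀ u, wAct u σ = wAct w σ ↔ u = w := fun u =>
    ⟨fun h => letters_injective (funext fun k => by
      simpa [letters_wAct] using wAct_eq_iff.mp h (σ⁻¹ k)), fun h => h ▸ rfl⟩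
  suffices (D.bas d).coord (wAct w σ) ∘ₗ D.act σ = permSign P σ w • (D.bas d).coord w from
    LinearMap.congr_fun this x
  refine (D.bas d).ext fun u => ?_
  by_cases huw : u = w
  · simp [act_bas, huw]
  · simp [act_bas, hinj, huw]

variable {D} in
theorem mem_schurS_iff_repr_wAct {x : T d} :
    x ∈ SchurS D d ↔
      ∀ σ w, (D.bas d).repr x (wAct w σ) = permSign P σ w * (D.bas d).repr x w := by
  have hsurj : ∀ (σ : Equiv.Perm (Fin d)) (w : WordTriple β n d), ∃ u, wAct u σ = w :=
    fun σ w => ⟨wAct w σ⁻¹, wAct_eq_iff.mpr fun k => by simp [letters_wAct]⟩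
  refine forall_congr' fun σ => ⟨fun hx w => by rw [← D.repr_act, hx], fun hx => ?_⟩
  refine (D.bas d).ext_elem fun w => ?_
  obtain ⟨u, rfl⟩ := hsurj σ w
  rw [repr_act, hx]

/-- The term of the expansion of `x` in the basis of pure tensors that belongs to the word `u`.
It is used in place of its scalar and its basis vector because no compatibility of the
multiplication of `T d` with scalars is assumed. -/
def component (x : T d) (u : WordTriple β n d) : T d :=
  (D.bas d).repr x u • D.bas d u

theorem sum_component (x : T d) : ∑ u ∈ ((D.bas d).repr x).support, D.component x u = x :=
  (D.bas d).linearCombination_repr x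

variable {D} in
theorem act_component {x : T d} (hx : x ∈ SchurS D d) (σ : Equiv.Perm (Fin d))
    (u : WordTriple β n d) : D.act σ (D.component x u) = D.component x (wAct u σ) := by
  rw [component, map_smul, act_bas, component, mem_schurS_iff_repr_wAct.mp hx, smul_smul, mul_comm]

/-- `D.X · r s` as a multilinear map. -/
def pureTensor (r s : Fin d → Fin n) : MultilinearMap 𝕜 (fun _ : Fin d => A) (T d) where
  toFun a := D.X a r s
  map_update_add' a k x y := by
    convert D.X_update_add a r s k x y
  map_update_smul' a k c x := by
    convert D.X_update_smul a r s k c x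

theorem repr_X (a : Fin d → A) (r s : Fin d → Fin n) (w : WordTriple β n d) :
    (D.bas d).repr (D.X a r s) w =
      if r = w.2.1 ∧ s = w.2.2 then ∏ k, P.bas.repr (a k) (w.1 k) else 0 := by
  let coeffs : MultilinearMap 𝕜 (fun _ : Fin d => A) 𝕜 :=
    if r = w.2.1 ∧ s = w.2.2 then
      (MultilinearMap.mkPiAlgebra 𝕜 (Fin d) 𝕜).compLinearMap fun k => P.bas.coord (w.1 k)
    else 0
  have hcoeffs : ((D.bas d).coord w).compMultilinearMap (D.pureTensor r s) = coeffs := by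
    refine Module.Basis.ext_multilinear (fun _ => P.bas) fun b => ?_
    have hw : (b, r, s) = w ↔ (r = w.2.1 ∧ s = w.2.2) ∧ ∀ k, b k = w.1 k := by
      simp only [Prod.ext_iff, ← funext_iff]
      tauto
    change (D.bas d).repr (D.X (fun k => P.bas (b k)) r s) w = _
    rw [← D.bas_eq, Module.Basis.repr_self, Finsupp.single_apply, if_congr hw rfl rfl]
    by_cases hrs : r = w.2.1 ∧ s = w.2.2 <;>
      simp [coeffs, hrs, Finsupp.single_apply, prod_ite_zero]
  change ((D.bas d).coord w).compMultilinearMap (D.pureTensor r s) a = _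
  rw [hcoeffs]
  by_cases hrs : r = w.2.1 ∧ s = w.2.2 <;> simp [coeffs, hrs]

theorem smul_bas_eq_X (c : 𝕜) (u : WordTriple β n d) (k : Fin d) :
    c • D.bas d u =
      D.X (Function.update (fun j => P.bas (u.1 j)) k (c • P.bas (u.1 k))) u.2.1 u.2.2 := by
  rw [D.X_update_smul, Function.update_eq_self, ← D.bas_eq]

theorem repr_xiIdem (f : A) (w : WordTriple β n d) :
    (D.bas d).repr (xiIdem D f d) w =
      if w.2.1 = w.2.2 then ∏ k, P.bas.repr f (w.1 k) else 0 := by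
  simp only [xiIdem, map_sum, Finsupp.finsetSum_apply, repr_X, ite_and]
  rw [sum_ite_eq' univ w.2.1, if_pos (mem_univ _)]

end Tower

section Span

open MulAction

variable {P : GoodPair 𝕜 A β} (D : Tower 𝕜 A β n T P) (ord : LinearOrder (A × Fin n × Fin n))
  {d : ℕ}

theorem xiB_eq_sum [Nontrivial 𝕜] (u : WordTriple β n d) :
    xiB D ord u.1 u.2.1 u.2.2 =
      ∑ w ∈ univ.image (wAct u), (orderSign P ord u * orderSign P ord w) • D.bas d w := by
  let toA : WordTriple β n d → WordTriple A n d := fun w => (fun k => P.bas (w.1 k), w.2)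
  have htoA : Function.Injective toA := P.bas.injective.comp_left.prodMap Function.injective_id
  have himage : (univ.image fun σ : Equiv.Perm (Fin d) =>
      ((fun k => P.bas (u.1 k)) ∘ σ, u.2.1 ∘ σ, u.2.2 ∘ σ)) = (univ.image (wAct u)).image toA :=
    (image_image (f := wAct u) (g := toA)).symm
  rw [xiB, xiH, himage, sum_image htoA.injOn]
  refine sum_congr rfl fun w _ => ?_
  rw [D.bas_eq d w.1, ← Int.cast_smul_eq_zsmul 𝕜, orderSign, orderSign, ← pow_add]
  push_cast
  rfl

theorem repr_xiB [Nontrivial 𝕜] (u w : WordTriple β n d) :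
    (D.bas d).repr (xiB D ord u.1 u.2.1 u.2.2) w =
      if w ∈ orbit (Equiv.Perm (Fin d)) u then orderSign P ord u * orderSign P ord w else 0 := by
  have hmem : w ∈ univ.image (wAct u) ↔ w ∈ orbit (Equiv.Perm (Fin d)) u := by
    simp [mem_orbit_iff_exists_wAct]
  simp [xiB_eq_sum, Finsupp.finsetSum_apply, Finsupp.single_apply, ← hmem]

variable {ord} in
theorem xiB_mem_schurS [Nontrivial 𝕜] {u : WordTriple β n d} (hu : IsTriWord P u) :
    xiB D ord u.1 u.2.1 u.2.2 ∈ SchurS D d := by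
  refine Tower.mem_schurS_iff_repr_wAct.mpr fun σ w => ?_
  have hmem : wAct w σ ∈ orbit (Equiv.Perm (Fin d)) u ↔ w ∈ orbit (Equiv.Perm (Fin d)) u := by
    rw [← orbit_eq_iff, orbit_eq_iff.mpr (wAct_mem_orbit w σ), orbit_eq_iff]
  simp only [repr_xiB, hmem]
  split_ifs with hw
  · obtain ⟨τ, rfl⟩ := mem_orbit_iff_exists_wAct.mp hw
    rw [permSign_eq_orderSign_mul_orderSign ord (hu.wAct τ) σ]
    linear_combination (-orderSign P ord u * orderSign P ord (wAct (wAct u τ) σ)) *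
      orderSign_mul_self (P := P) ord (wAct u τ)
  · rw [mul_zero]

/-- The invariants whose coefficients vanish off `Tri^B(n,d)` and are divisible by `[w]^!_𝔠` at
every word `w`: a description of `T^A_𝔞(n,d)` by coefficients, see
`schurT_eq_divisibleInvariants`. -/
def divisibleInvariants (d : ℕ) : Submodule 𝕜 (T d) where
  carrier := {x | x ∈ SchurS D d ∧ ∀ w,
    (¬ IsTriWord P w → (D.bas d).repr x w = 0) ∧ (cFactorial P w : 𝕜) ∣ (D.bas d).repr x w}
  zero_mem' := ⟨zero_mem _, fun w => by simp⟩
  add_mem' := fun ⟨hx, hxw⟩ ⟨hy, hyw⟩ => ⟨add_mem hx hy, fun w =>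
    ⟨fun hw => by simp [(hxw w).1 hw, (hyw w).1 hw], by
      simpa using dvd_add (hxw w).2 (hyw w).2⟩⟩
  smul_mem' := fun c x ⟨hx, hxw⟩ => ⟨Submodule.smul_mem _ c hx, fun w =>
    ⟨fun hw => by simp [(hxw w).1 hw], by simpa using (hxw w).2.mul_left c⟩⟩

theorem repr_eta [Nontrivial 𝕜] (u w : WordTriple β n d) :
    (D.bas d).repr (eta D ord u.1 u.2.1 u.2.2) w =
      cFactorial P u * if w ∈ orbit (Equiv.Perm (Fin d)) u then
        orderSign P ord u * orderSign P ord w else 0 := by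
  rw [eta, map_nsmul, Finsupp.smul_apply, repr_xiB, nsmul_eq_mul]
  rfl

variable {ord} in
theorem eta_mem_divisibleInvariants [Nontrivial 𝕜] {u : WordTriple β n d}
    (hu : IsTriWord P u) : eta D ord u.1 u.2.1 u.2.2 ∈ divisibleInvariants D d := by
  refine ⟨nsmul_mem (xiB_mem_schurS D hu) _, fun w => ?_⟩
  rw [repr_eta]
  split_ifs with hw
  · obtain ⟨σ, rfl⟩ := mem_orbit_iff_exists_wAct.mp hw
    exact ⟨fun htri => absurd (hu.wAct σ) htri, by rw [cFactorial_wAct]; exact dvd_mul_right _ _⟩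
  · simp

variable {D ord} in
theorem support_repr_sub_smul_eta_ssubset [Nontrivial 𝕜] {x : T d} (hx : x ∈ SchurS D d)
    {u : WordTriple β n d} (hu : IsTriWord P u) (hxu : (D.bas d).repr x u ≠ 0) {c : 𝕜}
    (hc : (D.bas d).repr x u = cFactorial P u * c) :
    ((D.bas d).repr (x - c • eta D ord u.1 u.2.1 u.2.2)).support ⊂
      ((D.bas d).repr x).support := by
  set y := x - c • eta D ord u.1 u.2.1 u.2.2 with hy
  have hy_mem : y ∈ SchurS D d :=
    sub_mem hx (Submodule.smul_mem _ c (eta_mem_divisibleInvariants D hu).1)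
  have hy_repr : ∀ w, (D.bas d).repr y w =
      (D.bas d).repr x w - c * (D.bas d).repr (eta D ord u.1 u.2.1 u.2.2) w := fun w => by simp [hy]
  have hy_u : (D.bas d).repr y u = 0 := by
    rw [hy_repr, repr_eta, if_pos (mem_orbit_self u), orderSign_mul_self, hc]
    ring
  have hy_orbit : ∀ w ∈ orbit (Equiv.Perm (Fin d)) u, (D.bas d).repr y w = 0 := by
    intro w hw
    obtain ⟨σ, rfl⟩ := mem_orbit_iff_exists_wAct.mp hw
    rw [Tower.mem_schurS_iff_repr_wAct.mp hy_mem, hy_u, mul_zero]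
  refine Finset.ssubset_of_subset_of_ssubset (fun w hw => ?_)
    (erase_ssubset (Finsupp.mem_support_iff.mpr hxu))
  rw [Finsupp.mem_support_iff] at hw
  have hw_orbit := mt (hy_orbit w) hw
  rw [hy_repr, repr_eta, if_neg hw_orbit, mul_zero, mul_zero, sub_zero] at hw
  have hwu : w ≠ u := fun h => hw_orbit (by rw [h]; exact mem_orbit_self u)
  exact mem_erase.mpr ⟨hwu, Finsupp.mem_support_iff.mpr hw⟩

variable {D} in
theorem divisibleInvariants_le_schurT [Nontrivial 𝕜] :
    divisibleInvariants D d ≤ SchurT D ord d := by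
  intro x hx
  induction hsupp : ((D.bas d).repr x).support using Finset.strongInduction generalizing x with
  | H s ih =>
  subst hsupp
  by_cases hzero : (D.bas d).repr x = 0
  · rw [(LinearEquiv.map_eq_zero_iff _).mp hzero]
    exact zero_mem _
  obtain ⟨u, hu⟩ := Finsupp.ne_iff.mp hzero
  have htri : IsTriWord P u := not_not.mp (mt (hx.2 u).1 hu)
  obtain ⟨c, hc⟩ := (hx.2 u).2
  have hsub : x - c • eta D ord u.1 u.2.1 u.2.2 ∈ divisibleInvariants D d :=
    sub_mem hx (Submodule.smul_mem _ c (eta_mem_divisibleInvariants D htri))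
  rw [← sub_add_cancel x (c • eta D ord u.1 u.2.1 u.2.2)]
  exact add_mem (ih _ (support_repr_sub_smul_eta_ssubset hx.1 htri hu hc) hsub rfl)
    (Submodule.smul_mem _ c (Submodule.subset_span ⟨_, _, _, htri, rfl⟩))

theorem schurT_eq_divisibleInvariants [Nontrivial 𝕜] :
    SchurT D ord d = divisibleInvariants D d := by
  refine le_antisymm (Submodule.span_le.mpr ?_) (divisibleInvariants_le_schurT ord)
  rintro _ ⟨b, r, s, htri, rfl⟩
  exact eta_mem_divisibleInvariants (u := (b, r, s)) D htri

end Span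

section YoungSubgroup

open MulAction

variable (P : GoodPair 𝕜 A β) {d : ℕ}

/-- The letters of `w` with those outside `B_𝔠` replaced by their positions, so that only equal
letters of `B_𝔠` get equal labels. -/
def label (w : WordTriple β n d) (k : Fin d) : (β × Fin n × Fin n) ⊕ Fin d :=
  if P.part (w.1 k) = 1 then Sum.inl (letters w k) else Sum.inr k

/-- The Young subgroup of the permutations that only interchange positions of `w` carrying equal
letters of `B_𝔠`; its order is `[w]^!_𝔠`. -/
def cPerms (w : WordTriple β n d) : Subgroup (Equiv.Perm (Fin d)) :=
  stabilizer (Equiv.Perm (Fin d)) (label P w)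

variable {P}

theorem label_eq_inl_iff {w : WordTriple β n d} {k : Fin d} {x : β × Fin n × Fin n} :
    label P w k = Sum.inl x ↔ P.part x.1 = 1 ∧ letters w k = x := by
  unfold label
  split_ifs with hk
  · exact Sum.inl_injective.eq_iff.trans ⟨fun h => ⟨h ▸ hk, h⟩, And.right⟩
  · exact ⟨False.elim, fun h => absurd (h.2 ▸ h.1 : P.part (letters w k).1 = 1) hk⟩

theorem eq_of_label_eq_inr {w : WordTriple β n d} {k l : Fin d} (h : label P w k = Sum.inr l) :
    k = l := by
  unfold label at h
  split_ifs at h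
  exact Sum.inr_injective h

theorem mem_cPerms_iff {w : WordTriple β n d} {σ : Equiv.Perm (Fin d)} :
    σ ∈ cPerms P w ↔
      ∀ k, letters w (σ k) = letters w k ∧ (P.part (w.1 k) ≠ 1 → σ k = k) := by
  refine mem_stabilizer_fun_iff.trans (funext_iff.trans (forall_congr' fun k => ?_))
  by_cases hk : P.part (w.1 k) = 1
  · rw [Function.comp_apply, show label P w k = Sum.inl (letters w k) from if_pos hk,
      label_eq_inl_iff]
    exact ⟨fun h => ⟨h.2, (absurd hk ·)⟩, fun h => ⟨hk, h.1⟩⟩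
  · rw [Function.comp_apply, show label P w k = Sum.inr k from if_neg hk]
    refine ⟨fun h => ?_, fun h => by rw [h.2 hk]; exact if_neg hk⟩
    have hσ := eq_of_label_eq_inr h
    exact ⟨congrArg _ hσ, fun _ => hσ⟩

theorem card_cPerms (w : WordTriple β n d) : Nat.card (cPerms P w) = cFactorial P w := by
  have hlabel : ∀ k, label P w k ∈ (univ.image (letters w)).disjSum univ := by
    intro k
    unfold label
    split_ifs
    · exact inl_mem_disjSum.mpr (mem_image_of_mem _ (mem_univ k))
    · exact inr_mem_disjSum.mpr (mem_univ k)
  have hinr : ∀ l, (#{k | label P w k = Sum.inr l}).factorial = 1 := by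
    refine fun l => Nat.factorial_eq_one.mpr (card_le_one.mpr fun i hi j hj => ?_)
    rw [eq_of_label_eq_inr (mem_filter.mp hi).2, eq_of_label_eq_inr (mem_filter.mp hj).2]
  rw [cPerms, card_stabilizer_fun _ hlabel, prod_disjSum, prod_congr rfl fun l _ => hinr l,
    prod_const_one, mul_one, cFactorial_eq_prod, prod_filter]
  refine prod_congr rfl fun x _ => ?_
  simp only [label_eq_inl_iff]
  split_ifs with hx <;> simp [hx]

theorem wAct_of_mem_cPerms {w : WordTriple β n d} {σ : Equiv.Perm (Fin d)}
    (hσ : σ ∈ cPerms P w) : wAct w σ = w :=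
  wAct_eq_iff.mpr fun k => (mem_cPerms_iff.mp hσ k).1

theorem permSign_of_mem_cPerms [Nontrivial 𝕜] {w : WordTriple β n d} {σ : Equiv.Perm (Fin d)}
    (hσ : σ ∈ cPerms P w) : permSign P σ w = 1 :=
  permSign_eq_one fun k hk => (mem_cPerms_iff.mp hσ k).2 (by rw [hk]; decide)

theorem restrictHom_mem_cPerms {Γ : Type*} [Group Γ] {φ : Γ →* Equiv.Perm (Fin d)}
    {p : Fin d → Prop} (hp : ∀ g k, p (φ g k) ↔ p k) {w : WordTriple β n d} {g : Γ}
    (hw : ∀ k, letters w (φ g k) = letters w k)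
    (hfix : ∀ k, p k → P.part (w.1 k) ≠ 1 → φ g k = k) :
    restrictHom φ p hp g ∈ cPerms P w := by
  refine mem_cPerms_iff.mpr fun k => ?_
  by_cases hk : p k
  · rw [restrictHom_of_mem hp g hk]
    exact ⟨hw k, hfix k hk⟩
  · rw [restrictHom_of_not_mem hp g hk]
    exact ⟨rfl, fun _ => rfl⟩

theorem mem_stabilizer_word_iff {Γ : Subgroup (Equiv.Perm (Fin d))} {u v : WordTriple β n d}
    {σ : Γ} : σ ∈ stabilizer Γ (u, v) ↔
      (∀ k, letters u (σ.1 k) = letters u k) ∧ ∀ k, letters v (σ.1 k) = letters v k := by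
  rw [← inv_mem_iff, mem_stabilizer_iff, ← wAct_eq_iff, ← wAct_eq_iff]
  exact Prod.ext_iff

theorem IsTriWord.eq_of_letters_eq {u : WordTriple β n d} (hu : IsTriWord P u) {k l : Fin d}
    (hkl : letters u k = letters u l) (hk : P.part (u.1 k) = 2) : k = l := by
  by_contra hne
  exact hu k l hne hkl hk

theorem card_stabilizer_dvd_cFactorial_mul {u v w : WordTriple β n d} (hu : IsTriWord P u)
    (hv : IsTriWord P v)
    (huv : ∀ k, P.part (w.1 k) = 1 → P.part (u.1 k) ≠ 0 ∨ P.part (v.1 k) ≠ 0) :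
    Nat.card (stabilizer (cPerms P w) (u, v)) ∣ cFactorial P u * cFactorial P v := by
  rw [← card_cPerms, ← card_cPerms]
  let φ : stabilizer (cPerms P w) (u, v) →* Equiv.Perm (Fin d) :=
    (cPerms P w).subtype.comp (Subgroup.subtype _)
  have hφ_u : ∀ g k, letters u (φ g k) = letters u k := fun g => (mem_stabilizer_word_iff.mp g.2).1
  have hφ_v : ∀ g k, letters v (φ g k) = letters v k := fun g => (mem_stabilizer_word_iff.mp g.2).2
  have hp : ∀ g k, P.part (u.1 (φ g k)) = 1 ↔ P.part (u.1 k) = 1 := fun g k => by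
    rw [show u.1 (φ g k) = u.1 k from congrArg Prod.fst (hφ_u g k)]
  refine card_dvd_card_mul_card_of_restrictHom (φ := φ)
    (Subtype.val_injective.comp Subtype.val_injective) hp
    (fun g => restrictHom_mem_cPerms hp (hφ_u g) fun k hk hk' => absurd hk hk')
    fun g => restrictHom_mem_cPerms _ (hφ_v g) fun k hk_u hk_v => ?_
  by_cases hk_w : P.part (w.1 k) = 1
  · rcases P.part_eq_zero_or_one_or_two (u.1 k) with h | h | h
    · have hodd : P.part (v.1 k) = 2 := by
        have := P.part_eq_zero_or_one_or_two (v.1 k)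
        have := huv k hk_w
        tauto
      exact (hv.eq_of_letters_eq (hφ_v g k).symm hodd).symm
    · exact absurd h hk_u
    · exact (hu.eq_of_letters_eq (hφ_u g k).symm h).symm
  · exact (mem_cPerms_iff.mp g.1.2 k).2 hk_w

end YoungSubgroup

section Product

open MulAction

variable {P : GoodPair 𝕜 A β} (D : Tower 𝕜 A β n T P) {d : ℕ}

/-- The contribution of the pair of words `p` to the coefficient of `x * y` at `w`. -/
def mulCoeff (x y : T d) (w : WordTriple β n d) (p : WordTriple β n d × WordTriple β n d) : 𝕜 :=
  (D.bas d).repr (D.component x p.1 * D.component y p.2) w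

theorem repr_mul_eq_sum_mulCoeff (x y : T d) (w : WordTriple β n d) :
    (D.bas d).repr (x * y) w =
      ∑ p ∈ ((D.bas d).repr x).support ×ˢ ((D.bas d).repr y).support, mulCoeff D x y w p := by
  conv_lhs => rw [← D.sum_component x, ← D.sum_component y]
  rw [sum_mul_sum, ← sum_product', map_sum, Finsupp.finsetSum_apply]
  rfl

variable {D}

theorem mulCoeff_wAct {x y : T d} (hx : x ∈ SchurS D d) (hy : y ∈ SchurS D d)
    (σ : Equiv.Perm (Fin d)) (w u v : WordTriple β n d) :
    mulCoeff D x y (wAct w σ) (wAct u σ, wAct v σ) = permSign P σ w * mulCoeff D x y w (u, v) := by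
  rw [mulCoeff, ← Tower.act_component hx, ← Tower.act_component hy, ← D.act_mul, D.repr_act]
  rfl

theorem wAct_mem_support_repr_iff {x : T d} (hx : x ∈ SchurS D d) (σ : Equiv.Perm (Fin d))
    (u : WordTriple β n d) :
    wAct u σ ∈ ((D.bas d).repr x).support ↔ u ∈ ((D.bas d).repr x).support := by
  rw [Finsupp.mem_support_iff, Finsupp.mem_support_iff, Tower.mem_schurS_iff_repr_wAct.mp hx]
  exact not_congr (IsUnit.of_mul_eq_one _ (permSign_mul_self σ u)).mul_right_eq_zero

theorem mulCoeff_eq_zero_of_repr_mul_eq_zero (x y : T d) {w u v : WordTriple β n d} {k : Fin d}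
    (h : ∀ c c' : 𝕜,
      P.bas.repr ((c • P.bas (u.1 k)) * (c' • P.bas (v.1 k))) (w.1 k) = 0) :
    mulCoeff D x y w (u, v) = 0 := by
  have hhomog : ∀ (c : 𝕜) (u : WordTriple β n d) (j : Fin d),
      Homog P (Function.update (fun j => P.bas (u.1 j)) k (c • P.bas (u.1 k)) j) := by
    intro c u
    refine (Function.forall_update_iff _ fun _ a => Homog P a).mpr
      ⟨(P.bas_homog _).imp (P.ev.smul_mem c) (P.od.smul_mem c), fun j _ => P.bas_homog _⟩
  rw [mulCoeff, Tower.component, Tower.component, D.smul_bas_eq_X _ u k, D.smul_bas_eq_X _ v k,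
    D.X_mul _ _ _ _ _ _ (hhomog _ u) (hhomog _ v)]
  split_ifs
  · rw [map_zsmul, Finsupp.smul_apply, D.repr_X]
    split_ifs
    · rw [prod_eq_zero (mem_univ k) (by simpa using h _ _), smul_zero]
    · rw [smul_zero]
  · rw [map_zero, Finsupp.zero_apply]

theorem mulCoeff_eq_zero_of_even (x y : T d) {w u v : WordTriple β n d} {k : Fin d}
    (hu : P.part (u.1 k) ≠ 2) (hv : P.part (v.1 k) ≠ 2) (hw : P.part (w.1 k) = 2) :
    mulCoeff D x y w (u, v) = 0 :=
  mulCoeff_eq_zero_of_repr_mul_eq_zero x y fun c c' => GoodPair.repr_eq_zero_of_mem_ev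
    (P.mul_ee _ (P.ev.smul_mem c (GoodPair.bas_mem_ev hu)) _
      (P.ev.smul_mem c' (GoodPair.bas_mem_ev hv))) hw

theorem mulCoeff_eq_zero_of_aa (x y : T d) {w u v : WordTriple β n d} {k : Fin d}
    (hu : P.part (u.1 k) = 0) (hv : P.part (v.1 k) = 0) (hw : P.part (w.1 k) ≠ 0) :
    mulCoeff D x y w (u, v) = 0 :=
  mulCoeff_eq_zero_of_repr_mul_eq_zero x y fun c c' => GoodPair.repr_eq_zero_of_mem_aa
    (P.aa_mul _ (P.aa.smul_mem c (P.bas_mem_aa _ hu)) _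
      (P.aa.smul_mem c' (P.bas_mem_aa _ hv))) hw

theorem cFactorial_mul_dvd_mulCoeff {x y : T d} {w u v : WordTriple β n d}
    (hx : (cFactorial P u : 𝕜) ∣ (D.bas d).repr x u)
    (hy : (cFactorial P v : 𝕜) ∣ (D.bas d).repr y v) :
    ((cFactorial P u * cFactorial P v : ℕ) : 𝕜) ∣ mulCoeff D x y w (u, v) := by
  obtain ⟨c, hc⟩ := hx
  obtain ⟨c', hc'⟩ := hy
  have hmul : D.component x u * D.component y v =
      (cFactorial P u * cFactorial P v) • ((c • D.bas d u) * (c' • D.bas d v)) := by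
    rw [Tower.component, Tower.component, hc, hc', mul_smul, mul_smul, Nat.cast_smul_eq_nsmul,
      Nat.cast_smul_eq_nsmul, smul_mul_smul_comm]
  rw [mulCoeff, hmul, map_nsmul, Finsupp.smul_apply, nsmul_eq_mul]
  exact dvd_mul_right _ _

theorem isTriWord_of_mem_support_repr {x : T d} (hx : x ∈ divisibleInvariants D d)
    {u : WordTriple β n d} (hu : u ∈ ((D.bas d).repr x).support) : IsTriWord P u :=
  not_not.mp (mt (hx.2 u).1 (Finsupp.mem_support_iff.mp hu))

theorem repr_mul_of_not_isTriWord {x y : T d} (hx : x ∈ divisibleInvariants D d)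
    (hy : y ∈ divisibleInvariants D d) {w : WordTriple β n d} (hw : ¬ IsTriWord P w) :
    (D.bas d).repr (x * y) w = 0 := by
  obtain ⟨k, l, hkl, hletters, hodd⟩ :
      ∃ k l, k ≠ l ∧ letters w k = letters w l ∧ P.part (w.1 k) = 2 := by
    simpa [IsTriWord, IsTriB, letters, and_assoc] using hw
  let τ := Equiv.swap k l
  have hw_fix : wAct w τ = w := wAct_swap_eq_self_iff.mpr hletters
  have hsign : permSign P τ w = -1 :=
    permSign_swap_eq_neg_one hkl hodd (congrArg (fun x => P.part x.1) hletters ▸ hodd)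
  have heven : ∀ u : WordTriple β n d, IsTriWord P u → wAct u τ = u → P.part (u.1 k) ≠ 2 :=
    fun u hu hfix hk => hkl (hu.eq_of_letters_eq (wAct_swap_eq_self_iff.mp hfix) hk)
  rw [repr_mul_eq_sum_mulCoeff]
  refine sum_involution (fun p _ => (wAct p.1 τ, wAct p.2 τ)) ?_ ?_ ?_ ?_
  · rintro ⟨u, v⟩ -
    rw [← hw_fix, mulCoeff_wAct hx.1 hy.1, hw_fix, hsign]
    ring
  · rintro ⟨u, v⟩ huv hne hfix
    obtain ⟨hu, hv⟩ := mem_product.mp huv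
    obtain ⟨hu_fix, hv_fix⟩ := Prod.mk.inj hfix
    exact hne (mulCoeff_eq_zero_of_even x y
      (heven u (isTriWord_of_mem_support_repr hx hu) hu_fix)
      (heven v (isTriWord_of_mem_support_repr hy hv) hv_fix) hodd)
  · rintro ⟨u, v⟩ huv
    simpa only [mem_product, wAct_mem_support_repr_iff hx.1, wAct_mem_support_repr_iff hy.1]
      using huv
  · rintro ⟨u, v⟩ -
    have hτ : ∀ u : WordTriple β n d, wAct (wAct u τ) τ = u := fun u =>
      wAct_eq_iff.mpr fun i => by simp [letters_wAct, τ]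
    simp only [hτ]

theorem card_stabilizer_dvd_mulCoeff {x y : T d} (hx : x ∈ divisibleInvariants D d)
    (hy : y ∈ divisibleInvariants D d) {w u v : WordTriple β n d} (hu : IsTriWord P u)
    (hv : IsTriWord P v) :
    (Nat.card (stabilizer (cPerms P w) (u, v)) : 𝕜) ∣ mulCoeff D x y w (u, v) := by
  by_cases huv : ∀ k, P.part (w.1 k) = 1 → P.part (u.1 k) ≠ 0 ∨ P.part (v.1 k) ≠ 0
  · exact (Nat.cast_dvd_cast (card_stabilizer_dvd_cFactorial_mul hu hv huv)).trans
      (cFactorial_mul_dvd_mulCoeff (hx.2 u).2 (hy.2 v).2)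
  · push Not at huv
    obtain ⟨k, hw, hu, hv⟩ := huv
    rw [mulCoeff_eq_zero_of_aa x y hu hv (by rw [hw]; decide)]
    exact dvd_zero _

theorem cFactorial_dvd_repr_mul [Nontrivial 𝕜] {x y : T d} (hx : x ∈ divisibleInvariants D d)
    (hy : y ∈ divisibleInvariants D d) (w : WordTriple β n d) :
    (cFactorial P w : 𝕜) ∣ (D.bas d).repr (x * y) w := by
  rw [repr_mul_eq_sum_mulCoeff, ← card_cPerms]
  refine card_dvd_sum_of_card_stabilizer_dvd ?_ ?_ ?_
  · rintro g ⟨u, v⟩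
    have hg : g.1⁻¹ ∈ cPerms P w := inv_mem g.2
    have h := mulCoeff_wAct hx.1 hy.1 g.1⁻¹ w u v
    rwa [wAct_of_mem_cPerms hg, permSign_of_mem_cPerms hg, one_mul] at h
  · rintro g ⟨u, v⟩ huv
    rw [mem_product] at huv ⊢
    exact huv.imp (wAct_mem_support_repr_iff hx.1 g.1⁻¹ u).mpr
      (wAct_mem_support_repr_iff hy.1 g.1⁻¹ v).mpr
  · rintro ⟨u, v⟩ huv
    obtain ⟨hu, hv⟩ := mem_product.mp huv
    exact card_stabilizer_dvd_mulCoeff hx hy (isTriWord_of_mem_support_repr hx hu)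
      (isTriWord_of_mem_support_repr hy hv)

theorem mul_mem_divisibleInvariants [Nontrivial 𝕜] {x y : T d}
    (hx : x ∈ divisibleInvariants D d) (hy : y ∈ divisibleInvariants D d) :
    x * y ∈ divisibleInvariants D d :=
  ⟨fun σ => by rw [D.act_mul, hx.1, hy.1], fun w =>
    ⟨repr_mul_of_not_isTriWord hx hy, cFactorial_dvd_repr_mul hx hy w⟩⟩

variable (D) in
theorem xiIdem_mem_divisibleInvariants [Nontrivial 𝕜] {f : A} (hf : f ∈ P.aa) (d : ℕ) :
    xiIdem D f d ∈ divisibleInvariants D d := by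
  have hpart : ∀ w, (D.bas d).repr (xiIdem D f d) w ≠ 0 → ∀ k, P.part (w.1 k) = 0 := by
    intro w hw k
    by_contra hk
    refine hw ?_
    rw [D.repr_xiIdem, prod_eq_zero (mem_univ k) (GoodPair.repr_eq_zero_of_mem_aa hf hk), ite_self]
  refine ⟨Tower.mem_schurS_iff_repr_wAct.mpr fun σ w => ?_, fun w => ?_⟩
  · have hinv : (D.bas d).repr (xiIdem D f d) (wAct w σ) = (D.bas d).repr (xiIdem D f d) w := by
      simp only [D.repr_xiIdem, wAct, σ.surjective.injective_comp_right.eq_iff,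
        Function.comp_apply, Equiv.prod_comp σ fun k => P.bas.repr f (w.1 k)]
    by_cases hw : (D.bas d).repr (xiIdem D f d) w = 0
    · rw [hinv, hw, mul_zero]
    · rw [hinv, permSign_eq_one fun k hk => absurd (hpart w hw k ▸ hk) (by decide), one_mul]
  · by_cases hw : (D.bas d).repr (xiIdem D f d) w = 0
    · rw [hw]
      exact ⟨fun _ => rfl, dvd_zero _⟩
    · have htri : IsTriWord P w := fun k _ _ _ => by rw [hpart w hw k]; decide
      rw [cFactorial_eq_one fun k => by rw [hpart w hw k]; decide, Nat.cast_one]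
      exact ⟨(absurd htri), one_dvd _⟩

end Product

theorem statement0_general [Nontrivial 𝕜] {P : GoodPair 𝕜 A β} (D : Tower 𝕜 A β n T P)
    (ord : LinearOrder (A × Fin n × Fin n)) (d : ℕ) :
    (SchurT D ord d ≤ SchurS D d ∧
      ∀ x ∈ SchurT D ord d, ∀ y ∈ SchurT D ord d, x * y ∈ SchurT D ord d) ∧
    ∀ f ∈ P.aa, xiIdem D f d ∈ SchurT D ord d := by
  rw [schurT_eq_divisibleInvariants]
  exact ⟨⟨fun _ hx => hx.1, fun _ hx _ hy => mul_mem_divisibleInvariants hx hy⟩,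
    fun _ hf => xiIdem_mem_divisibleInvariants D hf d⟩

/-- The `𝕜`-submodule `T^A_𝔞(n,d)` is closed under the multiplication of
`S^A(n,d)` (and is contained in `S^A(n,d)`), i.e. it is a `𝕜`-subalgebra of `S^A(n,d)`.
Moreover, if `(A,𝔞)` is a unital good pair (there is a unit `1_A` of `A` lying in `𝔞`),
then `T^A_𝔞(n,d)` contains the identity `1_A ⊗ ⋯ ⊗ 1_A = Σ_r ξ^{1_A}_{r_1,r_1} ⊗ ⋯` of
`S^A(n,d)`, i.e. it is a unital subalgebra. -/
theorem statement0 {𝕜 A β : Type} [CommRing 𝕜] [IsDomain 𝕜] [CharZero 𝕜]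
    [NonUnitalRing A] [Module 𝕜 A] [SMulCommClass 𝕜 A A] [IsScalarTower 𝕜 A A]
    {n : ℕ} (hn : 0 < n) {T : ℕ → Type} [∀ e, NonUnitalRing (T e)] [∀ e, Module 𝕜 (T e)]
    (P : GoodPair 𝕜 A β) (D : Tower 𝕜 A β n T P) (ord : LinearOrder (A × Fin n × Fin n))
    (d : ℕ) :
    (SchurT D ord d ≤ SchurS D d ∧
      ∀ x ∈ SchurT D ord d, ∀ y ∈ SchurT D ord d, x * y ∈ SchurT D ord d) ∧
    (∀ one : A, one ∈ P.aa → (∀ a : A, one * a = a ∧ a * one = a) →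
      xiIdem D one d ∈ SchurT D ord d) :=
  ⟨(statement0_general D ord d).1, fun one hone _ => (statement0_general D ord d).2 one hone⟩

end GS
end
end

section
/- Let (𝐚,𝐫,𝐭), (𝐜,𝐭,𝐮) ∈ Tri^B(n,d), and let 1 ≤ k < d be such that a_k and c_k have the same parity, or a_{k+1} and c_{k+1} have the same parity. Let s_k ∈ S_d be the transposition of k and k+1. Then (−1)^{⟨𝐚,𝐫,𝐭⟩ + ⟨𝐜,𝐭,𝐮⟩ + ⟨𝐚,𝐜⟩} = (−1)^{⟨𝐚s_k, 𝐫s_k, 𝐭s_k⟩ + ⟨𝐜s_k, 𝐭s_k, 𝐮s_k⟩ + ⟨𝐚s_k, 𝐜s_k⟩}. -/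
open Finset

open scoped Classical TensorProduct

noncomputable section

namespace GS

variable {𝕜 A β : Type} [CommRing 𝕜] [NonUnitalRing A] [Module 𝕜 A]

variable {n : ℕ} {T : ℕ → Type} [∀ e, NonUnitalRing (T e)] [∀ e, Module 𝕜 (T e)]

/-!
Transposing the adjacent places `k` and `k + 1` only affects the contribution of that single pair
of places to each of the three counts. Writing `|x| ∈ ℤ/2` for the parity of `x`, modulo `2` the
counts `⟨𝐚,𝐫,𝐭⟩`, `⟨𝐜,𝐭,𝐮⟩` and `⟨𝐚,𝐜⟩` change by `|a_k||a_{k+1}|`, `|c_k||c_{k+1}|` and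
`|a_k||c_{k+1}| + |a_{k+1}||c_k|`. The total change is the product
`(|a_k| + |c_k|)(|a_{k+1}| + |c_{k+1}|)`, and the parity hypothesis makes one of the factors vanish.
-/

section AdjacentTransposition

variable {ι : Type*} [LinearOrder ι] {k k' : ι}

theorem swap_lt_swap_iff_of_covBy (h : k ⋖ k') {i j : ι} (hij : ¬(i = k ∧ j = k'))
    (hji : ¬(i = k' ∧ j = k)) :
    Equiv.swap k k' i < Equiv.swap k k' j ↔ i < j := by
  have hlt : k < k' := h.lt
  have hleft : ∀ x, x < k' ↔ x ≤ k := fun x ↦ h.lt_iff_le_left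
  have hright : ∀ x, k < x ↔ k' ≤ x := fun x ↦ h.lt_iff_le_right
  grind

variable [Fintype ι]

theorem sum_lt_comp_swap_add {M : Type*} [AddCommMonoid M] (h : k ⋖ k') (f : ι → ι → M) :
    (∑ p : ι × ι with p.1 < p.2, f (Equiv.swap k k' p.1) (Equiv.swap k k' p.2)) + f k k'
      = (∑ p : ι × ι with p.1 < p.2, f p.1 p.2) + f k' k := by
  have hmem : (k, k') ∈ ({p | p.1 < p.2} : Finset (ι × ι)) := by simpa using h.lt
  have hrest : ∑ p ∈ ({p | p.1 < p.2} : Finset (ι × ι)).erase (k, k'),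
        f (Equiv.swap k k' p.1) (Equiv.swap k k' p.2)
      = ∑ p ∈ ({p | p.1 < p.2} : Finset (ι × ι)).erase (k, k'), f p.1 p.2 := by
    refine sum_equiv ((Equiv.swap k k').prodCongr (Equiv.swap k k')) ?_ fun _ _ ↦ rfl
    rintro ⟨i, j⟩
    have hlt := swap_lt_swap_iff_of_covBy h (i := i) (j := j)
    have hkk' := h.lt
    simp only [mem_erase, mem_filter_univ, Equiv.prodCongr_apply, Prod.map_apply, ne_eq,
      Prod.mk.injEq, Equiv.swap_apply_eq_iff, Equiv.swap_apply_left, Equiv.swap_apply_right]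
    grind
  rw [← sum_erase_add _ _ hmem, ← sum_erase_add _ _ hmem, hrest, Equiv.swap_apply_left,
    Equiv.swap_apply_right, add_right_comm]

theorem natCast_card_lt_comp_swap (h : k ⋖ k') (Q : ι → ι → Prop) :
    (#{p : ι × ι | p.1 < p.2 ∧ Q (Equiv.swap k k' p.1) (Equiv.swap k k' p.2)} : ZMod 2)
      = #{p : ι × ι | p.1 < p.2 ∧ Q p.1 p.2}
        + ((if Q k k' then 1 else 0) + if Q k' k then 1 else 0) := by
  rw [add_comm (ite _ _ _), ← add_assoc, ← CharTwo.add_eq_iff_eq_add]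
  simpa only [← filter_filter, natCast_card_filter] using
    sum_lt_comp_swap_add h fun i j ↦ if Q i j then (1 : ZMod 2) else 0

end AdjacentTransposition

section Parity

/-- The parity `|x| ∈ ℤ/2` of a nonzero homogeneous element `x`, where `od` is the odd part. As in
`ang` and `koz`, only membership in `od` is tested: `0` counts as odd, and every element outside
`od` as even. -/
def parity (od : Submodule 𝕜 A) (x : A) : ZMod 2 := if x ∈ od then 1 else 0

theorem parity_add_parity_eq_zero {od : Submodule 𝕜 A} {x y : A} (h : x ∈ od ↔ y ∈ od) :
    parity od x + parity od y = 0 := by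
  simp only [parity, h, CharTwo.add_self_eq_zero]

theorem parity_mul_parity (od : Submodule 𝕜 A) (x y : A) :
    parity od x * parity od y = if x ∈ od ∧ y ∈ od then 1 else 0 := by
  simp only [parity, mul_ite, mul_one, mul_zero, ite_and]
  split_ifs <;> rfl

theorem neg_one_pow_eq_of_natCast_eq {R : Type*} [Monoid R] [HasDistribNeg R] {m l : ℕ}
    (h : (m : ZMod 2) = l) : (-1 : R) ^ m = (-1) ^ l :=
  neg_one_pow_congr (by simp only [← ZMod.natCast_eq_zero_iff_even, h])

variable {d : ℕ} {k k' : Fin d}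

theorem natCast_ang_comp_swap (od : Submodule 𝕜 A) (ord : LinearOrder (A × Fin n × Fin n))
    (hkk' : k ⋖ k') {a : Fin d → A} {r s : Fin d → Fin n}
    (ha : a k ∈ od → a k' ∈ od → (a k, r k, s k) ≠ (a k', r k', s k')) :
    (ang od ord (a ∘ Equiv.swap k k') (r ∘ Equiv.swap k k') (s ∘ Equiv.swap k k') : ZMod 2)
      = ang od ord a r s + parity od (a k) * parity od (a k') := by
  let Inv (i j : Fin d) : Prop :=
    a i ∈ od ∧ a j ∈ od ∧ ord.lt (a j, r j, s j) (a i, r i, s i)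
  have hInv : ((if Inv k k' then 1 else 0) + if Inv k' k then 1 else 0 : ZMod 2)
      = parity od (a k) * parity od (a k') := by
    rw [parity_mul_parity]
    by_cases hod : a k ∈ od ∧ a k' ∈ od
    · let := ord
      obtain hlt | hgt := lt_or_gt_of_ne (ha hod.1 hod.2)
      · simp [Inv, hod, hlt, hlt.not_gt]
      · simp [Inv, hod, hgt, hgt.not_gt]
    · rw [if_neg fun hI ↦ hod ⟨hI.1, hI.2.1⟩, if_neg fun hI ↦ hod ⟨hI.2.1, hI.1⟩, if_neg hod,
        add_zero]
  rw [← hInv]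
  simp only [ang, Function.comp_apply]
  convert natCast_card_lt_comp_swap hkk' Inv

theorem koz_eq_card_lt (od : Submodule 𝕜 A) (a c : Fin d → A) :
    koz od a c = #{p : Fin d × Fin d | p.1 < p.2 ∧ c p.1 ∈ od ∧ a p.2 ∈ od} :=
  card_equiv (Equiv.prodComm _ _) fun p ↦ by simp [and_comm]

theorem natCast_koz_comp_swap (od : Submodule 𝕜 A) (hkk' : k ⋖ k') (a c : Fin d → A) :
    (koz od (a ∘ Equiv.swap k k') (c ∘ Equiv.swap k k') : ZMod 2)
      = koz od a c + (parity od (c k) * parity od (a k') + parity od (c k') * parity od (a k)) := by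
  simp only [koz_eq_card_lt, parity_mul_parity, Function.comp_apply]
  convert natCast_card_lt_comp_swap hkk' fun i j ↦ c i ∈ od ∧ a j ∈ od

end Parity

theorem GoodPair.bas_mem_od_iff_s2 [Nontrivial 𝕜] (P : GoodPair 𝕜 A β) (i : β) :
    P.bas i ∈ P.od ↔ P.part i = 2 := by
  refine ⟨fun hod ↦ ?_, P.bas_mem_od i⟩
  by_contra hne
  have hev : P.bas i ∈ P.ev := by
    obtain haa | hcc : P.part i = 0 ∨ P.part i = 1 := by omega
    · exact P.aa_le_ev (P.bas_mem_aa i haa)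
    · exact P.aa_sup_cc ▸ Submodule.mem_sup_right (P.bas_mem_cc i hcc)
  exact P.bas.ne_zero i (Submodule.disjoint_def.1 P.compl.disjoint _ hev hod)

theorem IsTriB.entry_ne [Nontrivial 𝕜] {P : GoodPair 𝕜 A β} {d : ℕ} {b : Fin d → β}
    {r s : Fin d → Fin n} (hb : IsTriB P b r s) {k l : Fin d} (hkl : k ≠ l)
    (hod : P.bas (b k) ∈ P.od) :
    (P.bas (b k), r k, s k) ≠ (P.bas (b l), r l, s l) := by
  intro heq
  simp only [Prod.mk.injEq, P.bas.injective.eq_iff] at heq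
  exact hb k l hkl (by simpa only [Prod.mk.injEq] using heq) ((P.bas_mem_od_iff_s2 _).1 hod)

theorem statement2_general (od : Submodule 𝕜 A) (ord : LinearOrder (A × Fin n × Fin n)) {d : ℕ}
    {a c : Fin d → A} {r t u : Fin d → Fin n} {k k' : Fin d} (hkk' : k ⋖ k')
    (ha : a k ∈ od → a k' ∈ od → (a k, r k, t k) ≠ (a k', r k', t k'))
    (hc : c k ∈ od → c k' ∈ od → (c k, t k, u k) ≠ (c k', t k', u k'))
    (hpar : (a k ∈ od ↔ c k ∈ od) ∨ (a k' ∈ od ↔ c k' ∈ od)) :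
    (-1 : ℤ) ^ (ang od ord a r t + ang od ord c t u + koz od a c) =
      (-1) ^ (ang od ord (a ∘ Equiv.swap k k') (r ∘ Equiv.swap k k') (t ∘ Equiv.swap k k')
        + ang od ord (c ∘ Equiv.swap k k') (t ∘ Equiv.swap k k') (u ∘ Equiv.swap k k')
        + koz od (a ∘ Equiv.swap k k') (c ∘ Equiv.swap k k')) := by
  have hchange : (parity od (a k) + parity od (c k)) * (parity od (a k') + parity od (c k')) = 0 :=
    mul_eq_zero.2 (hpar.imp parity_add_parity_eq_zero parity_add_parity_eq_zero)
  refine neg_one_pow_eq_of_natCast_eq ?_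
  simp only [Nat.cast_add, natCast_ang_comp_swap od ord hkk' ha,
    natCast_ang_comp_swap od ord hkk' hc, natCast_koz_comp_swap od hkk' a c]
  linear_combination -hchange

/-- Let `(𝐚,𝐫,𝐭), (𝐜,𝐭,𝐮) ∈ Tri^B(n,d)` and let `1 ≤ k < d` (here `k` is
`0`-indexed, with `(k:ℕ)+1 < d`) be such that `a_k` and `c_k` have the same parity, or
`a_{k+1}` and `c_{k+1}` have the same parity.  With `s_k` the transposition of `k` and `k+1`,
`(−1)^{⟨𝐚,𝐫,𝐭⟩+⟨𝐜,𝐭,𝐮⟩+⟨𝐚,𝐜⟩} = (−1)^{⟨𝐚s_k,𝐫s_k,𝐭s_k⟩+⟨𝐜s_k,𝐭s_k,𝐮s_k⟩+⟨𝐚s_k,𝐜s_k⟩}`. -/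
theorem statement2 {𝕜 A β : Type} [CommRing 𝕜] [IsDomain 𝕜] [CharZero 𝕜]
    [NonUnitalRing A] [Module 𝕜 A] [SMulCommClass 𝕜 A A] [IsScalarTower 𝕜 A A]
    {n : ℕ} (hn : 0 < n)
    (P : GoodPair 𝕜 A β) (ord : LinearOrder (A × Fin n × Fin n)) (d : ℕ)
    (a c : Fin d → β) (r t u : Fin d → Fin n)
    (ha : IsTriB P a r t) (hc : IsTriB P c t u)
    (k : Fin d) (hk : (k : ℕ) + 1 < d)
    (hpar : (P.part (a k) = 2 ↔ P.part (c k) = 2) ∨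
      (P.part (a ⟨(k : ℕ) + 1, hk⟩) = 2 ↔ P.part (c ⟨(k : ℕ) + 1, hk⟩) = 2)) :
    ((-1 : ℤ) ^ (ang P.od ord (fun j => P.bas (a j)) r t
        + ang P.od ord (fun j => P.bas (c j)) t u
        + koz P.od (fun j => P.bas (a j)) (fun j => P.bas (c j)))) =
      ((-1 : ℤ) ^ (ang P.od ord ((fun j => P.bas (a j)) ∘ (Equiv.swap k ⟨(k : ℕ) + 1, hk⟩))
          (r ∘ (Equiv.swap k ⟨(k : ℕ) + 1, hk⟩)) (t ∘ (Equiv.swap k ⟨(k : ℕ) + 1, hk⟩))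
        + ang P.od ord ((fun j => P.bas (c j)) ∘ (Equiv.swap k ⟨(k : ℕ) + 1, hk⟩))
          (t ∘ (Equiv.swap k ⟨(k : ℕ) + 1, hk⟩)) (u ∘ (Equiv.swap k ⟨(k : ℕ) + 1, hk⟩))
        + koz P.od ((fun j => P.bas (a j)) ∘ (Equiv.swap k ⟨(k : ℕ) + 1, hk⟩))
          ((fun j => P.bas (c j)) ∘ (Equiv.swap k ⟨(k : ℕ) + 1, hk⟩)))) := by
  have hkk' : k ⋖ ⟨(k : ℕ) + 1, hk⟩ := by simp
  exact statement2_general P.od ord hkk' (fun hod _ ↦ ha.entry_ne hkk'.ne hod)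
    (fun hod _ ↦ hc.entry_ne hkk'.ne hod) (by simpa only [P.bas_mem_od_iff_s2] using hpar)

end GS
end
end

section
/- Let (𝐚,𝐩,𝐪), (𝐜,𝐮,𝐯) ∈ Tri^H(n,d) and (𝐛,𝐫,𝐬) ∈ Tri^B(n,d), and let f^{𝐛,𝐫,𝐬}_{𝐚,𝐩,𝐪;𝐜,𝐮,𝐯} ∈ 𝕜 be the structure constants defined by ξ^𝐚_{𝐩,𝐪}·ξ^𝐜_{𝐮,𝐯} = Σ f^{𝐛,𝐫,𝐬}_{𝐚,𝐩,𝐪;𝐜,𝐮,𝐯} ξ^𝐛_{𝐫,𝐬}, the sum running over a set of S_d-orbit representatives (𝐛,𝐫,𝐬) of Tri^B(n,d). Then f^{𝐛,𝐫,𝐬}_{𝐚,𝐩,𝐪;𝐜,𝐮,𝐯} = Σ (−1)^{⟨𝐚,𝐩,𝐪⟩ + ⟨𝐜,𝐮,𝐯⟩ + ⟨𝐚′,𝐫,𝐭⟩ + ⟨𝐜′,𝐭,𝐬⟩ + ⟨𝐚′,𝐜′⟩} κ^𝐛_{𝐚′,𝐜′}, where the sum is over all 𝐚′, 𝐜′ ∈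 H^d and 𝐭 ∈ [1,n]^d such that (𝐚′,𝐫,𝐭) ∼ (𝐚,𝐩,𝐪) and (𝐜′,𝐭,𝐬) ∼ (𝐜,𝐮,𝐯). -/
open Finset

open scoped Classical TensorProduct

noncomputable section

namespace GS

variable {𝕜 A β : Type} [CommRing 𝕜] [NonUnitalRing A] [Module 𝕜 A]

variable {n : ℕ} {T : ℕ → Type} [∀ e, NonUnitalRing (T e)] [∀ e, Module 𝕜 (T e)]

/-!
Both sides of the product rule are coefficients of one element of `M_n(A)^{⊗d}` at the basis
vector `(𝐛,𝐫,𝐬)`. The vector `ξ^𝐛_{𝐫,𝐬}` is a signed sum of the *distinct* basis vectors in the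
orbit of `(𝐛,𝐫,𝐬)`, and `(𝐛,𝐫,𝐬)` itself occurs with sign `+1`; hence in a combination of such
vectors for pairwise non-conjugate words, the coefficient at `(𝐛,𝐫,𝐬)` is the structure constant.
On the other hand the product of two orbit sums expands into products of pure tensors, and by
multilinearity the coefficient of `⊗ a'_k c'_k` at `𝐛` is `κ^𝐛_{𝐚',𝐜'}`.
-/

section Orbits

variable {d : ℕ}

/-- The `S_d`-orbit of a triple of words, as a finite set: `w' ∈ wordOrbit w` is the relation
`w' ∼ w`. -/
def wordOrbit (w : WordTriple β n d) : Finset (WordTriple β n d) :=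
  univ.image (wAct w)

theorem mem_wordOrbit {w w' : WordTriple β n d} :
    w' ∈ wordOrbit w ↔ ∃ σ : Equiv.Perm (Fin d), wAct w σ = w' := by
  simp only [wordOrbit, mem_image, mem_univ, true_and]

theorem self_mem_wordOrbit (w : WordTriple β n d) : w ∈ wordOrbit w :=
  mem_wordOrbit.2 ⟨1, rfl⟩

theorem Homog.of_mem_wordOrbit {P : GoodPair 𝕜 A β} {w w' : WordTriple A n d}
    (hw : ∀ k, Homog P (w.1 k)) (h : w' ∈ wordOrbit w) (k : Fin d) : Homog P (w'.1 k) := by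
  obtain ⟨σ, rfl⟩ := mem_wordOrbit.1 h
  exact hw (σ k)

/-- The triple of words in `A` spelled by a triple whose first word consists of indices of
basis elements. -/
def GoodPair.basWord (P : GoodPair 𝕜 A β) (w : WordTriple β n d) : WordTriple A n d :=
  (fun k => P.bas (w.1 k), w.2.1, w.2.2)

theorem GoodPair.basWord_injective [Nontrivial 𝕜] (P : GoodPair 𝕜 A β) :
    Function.Injective (P.basWord : WordTriple β n d → WordTriple A n d) := by
  rintro ⟨b, r, s⟩ ⟨b', r', s'⟩ h
  obtain ⟨hb, hrs⟩ := Prod.mk.inj h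
  have hb' : b = b' := funext fun k => P.bas.injective (congrFun hb k)
  rw [hb', hrs]

theorem GoodPair.wordOrbit_basWord (P : GoodPair 𝕜 A β) (w : WordTriple β n d) :
    wordOrbit (P.basWord w) = (wordOrbit w).image P.basWord := by
  rw [wordOrbit, wordOrbit, image_image]
  rfl

end Orbits

section Coefficients

variable {P : GoodPair 𝕜 A β} (D : Tower 𝕜 A β n T P) {d : ℕ}

/-- For fixed row and column words, the pure tensor `ξ^{a_1}_{r_1,s_1} ⊗ ⋯ ⊗ ξ^{a_d}_{r_d,s_d}`
as a multilinear function of `a_1, …, a_d`. -/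
def Tower.pureTensor_s3 (r s : Fin d → Fin n) : MultilinearMap 𝕜 (fun _ : Fin d => A) (T d) :=
  MultilinearMap.mk' (fun a => D.X a r s) (fun a k x y => D.X_update_add a r s k x y)
    (fun a k t x => D.X_update_smul a r s k t x)

theorem Tower.repr_X_s3 (a : Fin d → A) (p q : Fin d → Fin n) (b : Fin d → β)
    (r s : Fin d → Fin n) :
    (D.bas d).repr (D.X a p q) (b, r, s)
      = if p = r ∧ q = s then ∏ k, P.bas.repr (a k) (b k) else 0 := by
  let coordProd : MultilinearMap 𝕜 (fun _ : Fin d => A) 𝕜 :=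
    (MultilinearMap.mkPiAlgebra 𝕜 (Fin d) 𝕜).compLinearMap fun k => P.bas.coord (b k)
  have coord_pureTensor : ((D.bas d).coord (b, r, s)).compMultilinearMap (D.pureTensor_s3 p q)
      = (if p = r ∧ q = s then (1 : 𝕜) else 0) • coordProd := by
    refine Module.Basis.ext_multilinear (fun _ => P.bas) fun v => ?_
    have hbas : D.pureTensor_s3 p q (fun k => P.bas (v k)) = D.bas d (v, p, q) :=
      (D.bas_eq d v p q).symm
    have hprod : coordProd (fun k => P.bas (v k)) = if v = b then 1 else 0 := by
      simp [coordProd, Finsupp.single_apply, prod_ite_zero, funext_iff]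
    rw [LinearMap.compMultilinearMap_apply, hbas, smul_apply, hprod,
      Module.Basis.coord_apply, Module.Basis.repr_self, Finsupp.single_apply, smul_eq_mul,
      mul_boole, ← ite_and]
    simp only [Prod.mk.injEq]
  calc (D.bas d).repr (D.X a p q) (b, r, s)
      = (if p = r ∧ q = s then (1 : 𝕜) else 0) * ∏ k, P.bas.repr (a k) (b k) :=
        congrArg (· a) coord_pureTensor
    _ = _ := boole_mul _ _

theorem Tower.repr_X_mul_X {a c : Fin d → A} (ha : ∀ k, Homog P (a k))
    (hc : ∀ k, Homog P (c k)) (p q u v : Fin d → Fin n) (b : Fin d → β)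
    (r s : Fin d → Fin n) :
    (D.bas d).repr (D.X a p q * D.X c u v) (b, r, s)
      = if p = r ∧ u = q ∧ v = s then
          (-1 : 𝕜) ^ koz P.od a c * ∏ k, P.bas.repr (a k * c k) (b k) else 0 := by
  rw [D.X_mul a c p q u v ha hc]
  by_cases hqu : q = u
  · subst hqu
    simp [D.repr_X_s3]
  · simp [hqu, Ne.symm hqu]

variable (ord : LinearOrder (A × Fin n × Fin n))

theorem repr_xiH_mul_xiH {a c : Fin d → A} (ha : ∀ k, Homog P (a k))
    (hc : ∀ k, Homog P (c k)) (p q u v : Fin d → Fin n) (b : Fin d → β)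
    (r s : Fin d → Fin n) :
    (D.bas d).repr (xiH D ord a p q * xiH D ord c u v) (b, r, s)
      = ∑ w ∈ (wordOrbit (a, p, q) ×ˢ wordOrbit (c, u, v)).filter
          fun w => w.1.2.1 = r ∧ w.2.2.1 = w.1.2.2 ∧ w.2.2.2 = s,
        ((-1 : 𝕜) ^ (ang P.od ord a p q + ang P.od ord c u v
            + ang P.od ord w.1.1 r w.1.2.2 + ang P.od ord w.2.1 w.1.2.2 s
            + koz P.od w.1.1 w.2.1))
          * ∏ k : Fin d, P.bas.repr (w.1.1 k * w.2.1 k) (b k) := by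
  change (D.bas d).repr ((∑ w ∈ wordOrbit (a, p, q), _) * ∑ w ∈ wordOrbit (c, u, v), _) _ = _
  rw [sum_mul_sum, ← sum_product', map_sum, Finsupp.finsetSum_apply, sum_filter]
  refine sum_congr rfl ?_
  rintro ⟨⟨a', p', q'⟩, ⟨c', u', v'⟩⟩ hw
  obtain ⟨hw₁, hw₂⟩ := mem_product.1 hw
  have hX := D.repr_X_mul_X (Homog.of_mem_wordOrbit ha hw₁) (Homog.of_mem_wordOrbit hc hw₂)
    p' q' u' v' b r s
  simp only [smul_mul_assoc, mul_smul_comm, map_zsmul, Finsupp.smul_apply, hX]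
  split_ifs with h
  · obtain ⟨rfl, rfl, rfl⟩ := h
    push_cast [zsmul_eq_mul]
    ring
  · simp only [smul_zero]

theorem xiB_eq_sum_bas (w : WordTriple β n d) :
    xiB D ord w.1 w.2.1 w.2.2
      = ∑ w' ∈ wordOrbit w, (-1 : ℤ) ^ (ang P.od ord (P.basWord w).1 w.2.1 w.2.2
          + ang P.od ord (P.basWord w').1 w'.2.1 w'.2.2) • D.bas d w' := by
  cases subsingleton_or_nontrivial 𝕜
  · have := Module.subsingleton 𝕜 (T d)
    exact Subsingleton.elim _ _
  change ∑ w' ∈ wordOrbit (P.basWord w), _ = _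
  rw [P.wordOrbit_basWord, sum_image P.basWord_injective.injOn]
  refine sum_congr rfl fun w' _ => ?_
  rw [show D.bas d w' = _ from D.bas_eq d w'.1 w'.2.1 w'.2.2]
  rfl

theorem repr_xiB_s3 (w w' : WordTriple β n d) :
    (D.bas d).repr (xiB D ord w.1 w.2.1 w.2.2) w'
      = if w' ∈ wordOrbit w then (-1 : 𝕜) ^ (ang P.od ord (P.basWord w).1 w.2.1 w.2.2
          + ang P.od ord (P.basWord w').1 w'.2.1 w'.2.2) else 0 := by
  simp [xiB_eq_sum_bas, Finsupp.finsetSum_apply, Finsupp.single_apply]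

theorem repr_xiB_self (w : WordTriple β n d) :
    (D.bas d).repr (xiB D ord w.1 w.2.1 w.2.2) w = 1 := by
  rw [repr_xiB_s3, if_pos (self_mem_wordOrbit w)]
  exact Even.neg_one_pow ⟨_, rfl⟩

theorem repr_sum_smul_xiB {R : Set (WordTriple β n d)}
    (hR : ∀ w ∈ R, ∀ w' ∈ R, w' ∈ wordOrbit w → w' = w) {f : WordTriple β n d →₀ 𝕜}
    (hf : ∀ w ∈ f.support, w ∈ R) {w : WordTriple β n d} (hw : w ∈ R) :
    (D.bas d).repr (f.sum fun w' t => t • xiB D ord w'.1 w'.2.1 w'.2.2) w = f w := by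
  rw [Finsupp.sum, map_sum, Finsupp.finsetSum_apply, sum_eq_single w]
  · rw [map_smul, Finsupp.smul_apply, repr_xiB_self, smul_eq_mul, mul_one]
  · intro w' hw' hne
    have hnotMem : w ∉ wordOrbit w' := fun h => hne (hR w' (hf w' hw') w hw h).symm
    rw [map_smul, Finsupp.smul_apply, repr_xiB_s3, if_neg hnotMem, smul_zero]
  · intro hw'
    rw [Finsupp.notMem_support_iff.1 hw', zero_smul, map_zero, Finsupp.zero_apply]

theorem statement3_general {R : Set (WordTriple β n d)}
    (hR : ∀ w ∈ R, ∀ w' ∈ R, w' ∈ wordOrbit w → w' = w)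
    {a c : Fin d → A} (ha : ∀ k, Homog P (a k)) (hc : ∀ k, Homog P (c k))
    {p q u v : Fin d → Fin n} {f : WordTriple β n d →₀ 𝕜} (hf : ∀ w ∈ f.support, w ∈ R)
    (hdef : xiH D ord a p q * xiH D ord c u v
      = f.sum fun w t => t • xiB D ord w.1 w.2.1 w.2.2)
    {b : Fin d → β} {r s : Fin d → Fin n} (hmem : ((b, r, s) : WordTriple β n d) ∈ R) :
    f (b, r, s) =
      ∑ w ∈ (wordOrbit (a, p, q) ×ˢ wordOrbit (c, u, v)).filter
          fun w => w.1.2.1 = r ∧ w.2.2.1 = w.1.2.2 ∧ w.2.2.2 = s,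
        ((-1 : 𝕜) ^ (ang P.od ord a p q + ang P.od ord c u v
            + ang P.od ord w.1.1 r w.1.2.2 + ang P.od ord w.2.1 w.1.2.2 s
            + koz P.od w.1.1 w.2.1))
          * ∏ k : Fin d, P.bas.repr (w.1.1 k * w.2.1 k) (b k) := by
  rw [← repr_sum_smul_xiB D ord hR hf hmem, ← hdef, repr_xiH_mul_xiH D ord ha hc]

end Coefficients

/-- (Generalized Green product rule.)  Let `(𝐚,𝐩,𝐪), (𝐜,𝐮,𝐯) ∈ Tri^H(n,d)`
and let `f` be the structure constants defined by
`ξ^𝐚_{𝐩,𝐪}·ξ^𝐜_{𝐮,𝐯} = Σ f^{𝐛,𝐫,𝐬} ξ^𝐛_{𝐫,𝐬}`, the sum over a set `R` of `S_d`-orbit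
representatives of `Tri^B(n,d)`.  Then for `(𝐛,𝐫,𝐬) ∈ R`,
`f^{𝐛,𝐫,𝐬} = Σ (−1)^{⟨𝐚,𝐩,𝐪⟩+⟨𝐜,𝐮,𝐯⟩+⟨𝐚′,𝐫,𝐭⟩+⟨𝐜′,𝐭,𝐬⟩+⟨𝐚′,𝐜′⟩} κ^𝐛_{𝐚′,𝐜′}`,
the sum over all `𝐚′, 𝐜′ ∈ H^d`, `𝐭 ∈ [1,n]^d` with `(𝐚′,𝐫,𝐭) ∼ (𝐚,𝐩,𝐪)` and
`(𝐜′,𝐭,𝐬) ∼ (𝐜,𝐮,𝐯)` (encoded below as the pairs of orbit elements with matching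
row/column words). -/
theorem statement3 {𝕜 A β : Type} [CommRing 𝕜] [IsDomain 𝕜] [CharZero 𝕜]
    [NonUnitalRing A] [Module 𝕜 A] [SMulCommClass 𝕜 A A] [IsScalarTower 𝕜 A A]
    {n : ℕ} (hn : 0 < n) {T : ℕ → Type} [∀ e, NonUnitalRing (T e)] [∀ e, Module 𝕜 (T e)]
    (P : GoodPair 𝕜 A β) (D : Tower 𝕜 A β n T P) (ord : LinearOrder (A × Fin n × Fin n))
    (d : ℕ) (R : Set (WordTriple β n d))
    (hR1 : ∀ w ∈ R, IsTriB P w.1 w.2.1 w.2.2)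
    (hR2 : ∀ w : WordTriple β n d, IsTriB P w.1 w.2.1 w.2.2 →
      ∃! w' : WordTriple β n d, w' ∈ R ∧ ∃ σ : Equiv.Perm (Fin d), wAct w σ = w')
    (a : Fin d → A) (p q : Fin d → Fin n) (c : Fin d → A) (u v : Fin d → Fin n)
    (hA : IsTriH P a p q) (hC : IsTriH P c u v)
    (f : WordTriple β n d →₀ 𝕜)
    (hsupp : ∀ w ∈ f.support, w ∈ R)
    (hdef : xiH D ord a p q * xiH D ord c u v
      = f.sum fun w cf => cf • xiB D ord w.1 w.2.1 w.2.2)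
    (b : Fin d → β) (r s : Fin d → Fin n)
    (hmem : ((b, r, s) : WordTriple β n d) ∈ R) (htri : IsTriB P b r s) :
    f (b, r, s) =
      ∑ w ∈ (((univ.image fun σ : Equiv.Perm (Fin d) => (a ∘ σ, p ∘ σ, q ∘ σ)) ×ˢ
          (univ.image fun σ : Equiv.Perm (Fin d) => (c ∘ σ, u ∘ σ, v ∘ σ))).filter
          fun w => w.1.2.1 = r ∧ w.2.2.1 = w.1.2.2 ∧ w.2.2.2 = s),
        ((-1 : 𝕜) ^ (ang P.od ord a p q + ang P.od ord c u v
            + ang P.od ord w.1.1 r w.1.2.2 + ang P.od ord w.2.1 w.1.2.2 s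
            + koz P.od w.1.1 w.2.1))
          * ∏ k : Fin d, P.bas.repr (w.1.1 k * w.2.1 k) (b k) := by
  refine statement3_general D ord (fun w hw w' hw' h => ?_) (fun k => (hA.1 k).1)
    (fun k => (hC.1 k).1) hsupp hdef hmem
  exact (hR2 w (hR1 w hw)).unique ⟨hw', mem_wordOrbit.1 h⟩ ⟨hw, 1, rfl⟩

end GS
end
end
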